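/- For every real k > 3/2 there exists C_k > 0 depending only on k such that for every λ ≥ 0 and all functions u, v on S² with finite G^{k/2}_λ norm, the product uv has finite G^{k/2}_λ norm and ‖uv‖_{G^{k/2}_λ} ≤ C_k ‖u‖_{G^{k/2}_λ} ‖v‖_{G^{k/2}_λ}. -/

import Mathlib

open MeasureTheory
open scoped ENNReal

noncomputable section

/-- Functions on the unit sphere, represented in colatitude-longitude coordinates `(θ, φ)`. -/
abbrev SphereFun : Type := ℝ → ℝ → ℝ

/-- The `L²` inner product on the sphere:
`⟨u,v⟩ = ∫₀^{2π} ∫₀^π u v sin θ dθ dφ`. -/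
def sInner (u v : SphereFun) : ℝ :=
  ∫ φ in (0:ℝ)..(2*Real.pi), ∫ θ in (0:ℝ)..Real.pi, u θ φ * v θ φ * Real.sin θ

/-- Legendre polynomials via Rodrigues' formula. -/
def legP (n : ℕ) (s : ℝ) : ℝ :=
  (1 / ((2:ℝ)^n * (Nat.factorial n : ℝ))) * iteratedDeriv n (fun x : ℝ => (x^2 - 1)^n) s

/-- Associated Legendre functions `P_n^m`. -/
def assocLegP (n m : ℕ) (s : ℝ) : ℝ :=
  (-1 : ℝ)^m * (1 - s^2) ^ ((m : ℝ)/2) * iteratedDeriv m (legP n) s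

/-- Real spherical harmonics `Y_n^m`. -/
def Ynm (n : ℕ) (m : ℤ) : SphereFun := fun θ φ =>
  if m = 0 then
    Real.sqrt ((2*(n:ℝ)+1)/(4*Real.pi)) * legP n (Real.cos θ)
  else if 0 < m then
    (-1 : ℝ)^(m.natAbs) * Real.sqrt 2 *
      Real.sqrt ((2*(n:ℝ)+1)/(4*Real.pi) *
        ((Nat.factorial (n - m.natAbs) : ℝ) / (Nat.factorial (n + m.natAbs) : ℝ))) *
      assocLegP n m.natAbs (Real.cos θ) * Real.cos ((m.natAbs : ℝ) * φ)
  else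
    (-1 : ℝ)^(m.natAbs) * Real.sqrt 2 *
      Real.sqrt ((2*(n:ℝ)+1)/(4*Real.pi) *
        ((Nat.factorial (n - m.natAbs) : ℝ) / (Nat.factorial (n + m.natAbs) : ℝ))) *
      assocLegP n m.natAbs (Real.cos θ) * Real.sin ((m.natAbs : ℝ) * φ)

/-- The spherical-harmonic coefficient `u_n^m = ⟨u, Y_n^m⟩`. -/
def coeff (u : SphereFun) (n : ℕ) (m : ℤ) : ℝ := sInner u (Ynm n m)

/-- `μ_n = n(n+1) + 1`. -/
def muSp (n : ℕ) : ℝ := (n:ℝ)*((n:ℝ)+1)+1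

/-- Squared (inhomogeneous) Sobolev norm `‖u‖²_{H^k} = Σ μ_n^k |u_n^m|²`. -/
def sobNormSq (k : ℕ) (u : SphereFun) : ℝ≥0∞ :=
  ∑' p : ℕ × ℤ, if |p.2| ≤ (p.1 : ℤ) then
    ENNReal.ofReal ((muSp p.1)^k * (coeff u p.1 p.2)^2) else 0

/-- Squared homogeneous Sobolev norm `‖u‖²_{Ḣ^k} = Σ_{n ≥ 1} λ_n^k |u_n^m|²`. -/
def dotNormSq (k : ℕ) (u : SphereFun) : ℝ≥0∞ :=
  ∑' p : ℕ × ℤ, if 1 ≤ p.1 ∧ |p.2| ≤ (p.1 : ℤ) then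
    ENNReal.ofReal (((p.1:ℝ)*((p.1:ℝ)+1))^k * (coeff u p.1 p.2)^2) else 0

/-- Squared Gevrey norm `‖u‖²_{G_λ} = Σ_{n ≥ 1} μ_n² e^{2λ√μ_n} |u_n^m|²`. -/
def gevNormSq (lam : ℝ) (u : SphereFun) : ℝ≥0∞ :=
  ∑' p : ℕ × ℤ, if 1 ≤ p.1 ∧ |p.2| ≤ (p.1 : ℤ) then
    ENNReal.ofReal ((muSp p.1)^2 * Real.exp (2*lam*Real.sqrt (muSp p.1)) *
      (coeff u p.1 p.2)^2) else 0

/-- `∂_θ`. -/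
def dTheta (u : SphereFun) : SphereFun := fun θ φ => deriv (fun t => u t φ) θ

/-- `∂_φ`. -/
def dPhi (u : SphereFun) : SphereFun := fun θ φ => deriv (fun p => u θ p) φ

/-- The Laplace–Beltrami operator in colatitude-longitude coordinates:
`Δu = (1/sinθ)∂_θ(sinθ ∂_θu) + (1/sin²θ)∂²_φu`. -/
def lapS (u : SphereFun) : SphereFun := fun θ φ =>
  (1 / Real.sin θ) * deriv (fun t => Real.sin t * dTheta u t φ) θ
  + (1 / (Real.sin θ)^2) * dPhi (dPhi u) θ φ

/-- A zonal function: one depending only on the colatitude `θ`. -/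
def Zonal (u : SphereFun) : Prop := ∀ (θ φ₁ φ₂ : ℝ), u θ φ₁ = u θ φ₂

/-- Zonal on the coordinate chart `θ ∈ [0, π]`. -/
def ZonalOn (u : SphereFun) : Prop :=
  ∀ θ ∈ Set.Icc (0:ℝ) Real.pi, ∀ (φ₁ φ₂ : ℝ), u θ φ₁ = u θ φ₂

/-- `2π`-periodicity in the longitude. -/
def PeriodicPhi (u : SphereFun) : Prop := ∀ θ φ, u θ (φ + 2*Real.pi) = u θ φ

/-- The advection term `U·∇f` for the velocity `U = ∇⊥Ψ`, i.e.
`(1/sinθ)∂_φΨ ∂_θf − ∂_θΨ (1/sinθ)∂_φf`. -/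
def advect (Ψ f : SphereFun) : SphereFun := fun θ φ =>
  (1 / Real.sin θ) * dPhi Ψ θ φ * dTheta f θ φ
  - dTheta Ψ θ φ * ((1 / Real.sin θ) * dPhi f θ φ)

/-- Smoothness in the coordinates. -/
def SphSmooth (u : SphereFun) : Prop := ContDiff ℝ (⊤ : ℕ∞) (Function.uncurry u)

/-- A function is trivial if it is a zonal function plus an element of
`span{Y₂^m : |m| ≤ 2}`; non-triviality is the negation of this. -/
def SphNontrivial (u : SphereFun) : Prop :=
  ¬ ∃ (z : SphereFun) (c : ℤ → ℝ), Zonal z ∧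
      ∀ θ ∈ Set.Icc (0:ℝ) Real.pi, ∀ φ : ℝ,
        u θ φ = z θ φ + ∑ m ∈ Finset.Icc (-2 : ℤ) 2, c m * Ynm 2 m θ φ

/-- Real analyticity on the sphere, characterized by membership in a Gevrey class. -/
def RealAnalyticSphere (u : SphereFun) : Prop := ∃ lam > 0, gevNormSq lam u < ⊤

/-- Squared Gevrey norm of index `k/2` and radius `λ`:
`‖u‖²_{G^{k/2}_λ} = Σ_{n ≥ 0} Σ_{|m| ≤ n} μ_n^k e^{2λ√μ_n} |u_n^m|²`. -/
def gevKNormSq (k lam : ℝ) (u : SphereFun) : ℝ≥0∞ :=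
  ∑' p : ℕ × ℤ, if |p.2| ≤ (p.1 : ℤ) then
    ENNReal.ofReal ((muSp p.1) ^ k * Real.exp (2*lam*Real.sqrt (muSp p.1)) *
      (coeff u p.1 p.2)^2) else 0


/-! Legendre polynomials as polynomials -/

open Polynomial in
def rodP (n j : ℕ) : Polynomial ℝ := derivative^[j] ((X^2 - 1)^n)

open Polynomial in
lemma rodP_succ (n j : ℕ) : derivative (rodP n j) = rodP n (j+1) := by
  unfold rodP; rw [Function.iterate_succ_apply']

open Polynomial in
lemma rodP_ode (n j : ℕ) :
    (X^2 - 1) * rodP n (j+2) + C (2*((j:ℝ)+1-n)) * X * rodP n (j+1)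
      + C (((j:ℝ)+1)*(j-2*n)) * rodP n j = 0 := by
  induction j with
  | zero =>
    have h1 : (X^2-1) * rodP n 1 = C (2*(n:ℝ)) * X * rodP n 0 := by
      unfold rodP
      rcases n with _ | n
      · simp
      · simp only [Function.iterate_one, Function.iterate_zero, id, derivative_pow, derivative_sub,
          derivative_X, derivative_one]
        simp only [Nat.add_sub_cancel, map_mul, C_eq_natCast, Nat.cast_add, Nat.cast_one, map_add,
          map_one, map_ofNat]
        push_cast
        ring_nf
    have h2 := congrArg derivative h1
    simp only [derivative_mul, rodP_succ, derivative_sub, derivative_pow, derivative_X,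
      derivative_one, derivative_C] at h2
    simp only [map_mul, map_sub, map_add, C_eq_natCast, map_one, map_ofNat] at h2 ⊢
    norm_num at h2 ⊢
    linear_combination h2
  | succ j ih =>
    have h2 := congrArg derivative ih
    simp only [derivative_mul, rodP_succ, derivative_sub, derivative_pow, derivative_X,
      derivative_one, derivative_C, derivative_add, derivative_zero] at h2
    simp only [map_mul, map_sub, map_add, C_eq_natCast, map_one, map_ofNat] at h2 ⊢
    norm_num at h2 ⊢
    linear_combination h2

/-- `m`-th derivative of the `n`-th Legendre polynomial. -/
def legD (n m : ℕ) : Polynomial ℝ :=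
  Polynomial.C (1 / ((2:ℝ)^n * (Nat.factorial n : ℝ))) * rodP n (n+m)

open Polynomial in
lemma legD_succ (n m : ℕ) : derivative (legD n m) = legD n (m+1) := by
  unfold legD
  rw [derivative_C_mul, rodP_succ]; rfl

open Polynomial in
lemma legD_ode (n m : ℕ) :
    (1 - X^2) * legD n (m+2) - C (2*((m:ℝ)+1)) * X * legD n (m+1)
      + C (((n:ℝ)-m)*(n+m+1)) * legD n m = 0 := by
  have h := rodP_ode n (n+m)
  unfold legD
  simp only [map_mul, map_sub, map_add, C_eq_natCast, map_one, map_ofNat, ← add_assoc] at h ⊢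
  push_cast at h
  linear_combination (-C (1 / ((2:ℝ)^n * (Nat.factorial n : ℝ)))) * h

open Polynomial in
lemma natDegree_legD (n m : ℕ) : (legD n m).natDegree ≤ n - m := by
  unfold legD rodP
  refine (natDegree_C_mul_le _ _).trans ((natDegree_iterate_derivative _ _).trans ?_)
  have : ((X^2 - 1 : Polynomial ℝ)^n).natDegree ≤ n * 2 := by
    refine natDegree_pow_le_of_le n ?_
    compute_degree
  omega

lemma legD_eq_zero {n m : ℕ} (h : n < m) : legD n m = 0 := by
  unfold legD rodP
  rw [Polynomial.iterate_derivative_eq_zero, mul_zero]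
  have : ((Polynomial.X^2 - 1 : Polynomial ℝ)^n).natDegree ≤ n * 2 := by
    refine Polynomial.natDegree_pow_le_of_le n ?_
    compute_degree
  omega

lemma iteratedDeriv_poly (p : Polynomial ℝ) (m : ℕ) :
    iteratedDeriv m (fun x => p.eval x) = fun x => (Polynomial.derivative^[m] p).eval x := by
  induction m with
  | zero => simp
  | succ m ih =>
    rw [iteratedDeriv_succ, ih, Function.iterate_succ_apply']
    funext x
    simp

lemma legP_eq (n : ℕ) : legP n = fun s => (legD n 0).eval s := by
  funext s
  unfold legP legD rodP
  have := iteratedDeriv_poly ((Polynomial.X^2 - 1)^n) n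
  simp only [Polynomial.eval_pow, Polynomial.eval_sub, Polynomial.eval_X, Polynomial.eval_one] at this
  rw [this]
  simp

lemma iteratedDeriv_legP (n m : ℕ) : iteratedDeriv m (legP n) = fun s => (legD n m).eval s := by
  rw [legP_eq, iteratedDeriv_poly]
  have : ∀ m, Polynomial.derivative^[m] (legD n 0) = legD n m := by
    intro m
    induction m with
    | zero => rfl
    | succ m ih => rw [Function.iterate_succ_apply', ih, legD_succ]
  rw [this]

open Polynomial in
lemma legD_eval_one (n : ℕ) : (legD n 0).eval 1 = 1 := by
  unfold legD rodP
  have h : (X^2 - 1 : Polynomial ℝ)^n = (X - C 1)^n * (X + C 1)^n := by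
    rw [← mul_pow]; congr 1; simp; ring
  rw [h, add_zero, iterate_derivative_mul, eval_mul, eval_finsetSum,
    Finset.sum_eq_single 0]
  · rw [Nat.sub_zero, iterate_derivative_X_sub_pow_self]
    simp
    norm_num
    field_simp
  · intro b hb hb0
    rw [iterate_derivative_X_sub_pow]
    have : n - (n - b) ≠ 0 := by simp at hb; omega
    simp [this]
  · simp

/-- ratio of factorials -/
def frat (n m : ℕ) : ℝ := (Nat.factorial (n - m) : ℝ) / (Nat.factorial (n + m) : ℝ)

lemma frat_pos (n m : ℕ) : 0 < frat n m := by unfold frat; positivity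

lemma frat_succ {n m : ℕ} (h : m < n) :
    frat n (m+1) * (((n:ℝ)-m)*(n+m+1)) = frat n m := by
  unfold frat
  obtain ⟨d, rfl⟩ : ∃ d, n = m + 1 + d := ⟨n - (m+1), by omega⟩
  rw [show m + 1 + d - (m+1) = d by omega, show m+1+d - m = d + 1 by omega,
    show m+1+d+(m+1) = (m+1+d+m)+1 by omega]
  rw [Nat.factorial_succ, Nat.factorial_succ]
  push_cast
  field_simp
  ring

open Polynomial in
def legT (n m : ℕ) : Polynomial ℝ := C (frat n m) * (1 - X^2)^m * (legD n m)^2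

open Polynomial in
lemma legT_deriv {n m : ℕ} (h : m < n) : derivative (legT n (m+1)) =
    C (frat n (m+1)) * (1 - X^2)^(m+1) * legD n (m+1) * legD n (m+2)
    - C (frat n m) * (1 - X^2)^m * legD n m * legD n (m+1) := by
  unfold legT
  have ho := legD_ode n m
  rw [← frat_succ h]
  simp only [derivative_mul, derivative_C, derivative_pow, derivative_sub, derivative_one,
    derivative_X, legD_succ]
  simp only [map_mul, map_sub, map_add, C_eq_natCast, map_one, map_ofNat] at ho ⊢
  norm_num at ho ⊢
  linear_combination (C (frat n (m+1)) * (1 - X^2)^m * legD n (m+1)) * ho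

open Polynomial in
lemma legT_sum (n : ℕ) (x : ℝ) :
    (legT n 0).eval x + 2 * ∑ m ∈ Finset.range n, (legT n (m+1)).eval x = 1 := by
  set S : Polynomial ℝ := legT n 0 + C 2 * ∑ m ∈ Finset.range n, legT n (m+1) with hS
  have hd : derivative S = 0 := by
    rw [hS, derivative_add, derivative_C_mul, derivative_sum,
      Finset.sum_congr rfl (fun m hm => legT_deriv (Finset.mem_range.1 hm))]
    rw [Finset.sum_range_sub (fun m => C (frat n m) * (1 - X^2)^m * legD n m * legD n (m+1))]
    rw [legD_eq_zero (show n < n+1 by omega)]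
    unfold legT
    simp only [derivative_mul, derivative_C, derivative_pow, legD_succ, pow_zero]
    have : frat n 0 = 1 := by simp [frat, Nat.factorial_ne_zero]
    simp [this]
    ring
  have hc := eq_C_of_derivative_eq_zero hd
  have e : ∀ y, S.eval y = (legT n 0).eval y + 2 * ∑ m ∈ Finset.range n, (legT n (m+1)).eval y := by
    intro y; simp [hS, eval_finsetSum]
  have h1 : S.eval 1 = 1 := by
    rw [e]
    have : frat n 0 = 1 := by simp [frat, Nat.factorial_ne_zero]
    simp [legT, legD_eval_one, this]
  rw [← e, hc, eval_C]
  rw [hc, eval_C] at h1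
  exact h1

/-- integral of a polynomial over [-1,1] -/
def pInt (p : Polynomial ℝ) : ℝ := ∫ x in (-1:ℝ)..1, p.eval x

lemma pInt_add (p q : Polynomial ℝ) : pInt (p+q) = pInt p + pInt q := by
  unfold pInt
  simp only [Polynomial.eval_add]
  exact intervalIntegral.integral_add (p.continuous.intervalIntegrable _ _) (q.continuous.intervalIntegrable _ _)

lemma pInt_C_mul (c : ℝ) (q : Polynomial ℝ) : pInt (Polynomial.C c * q) = c * pInt q := by
  unfold pInt
  simp

lemma pInt_deriv (p : Polynomial ℝ) : pInt (Polynomial.derivative p) = p.eval 1 - p.eval (-1) := by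
  unfold pInt
  exact intervalIntegral.integral_eq_sub_of_hasDerivAt (fun x _ => p.hasDerivAt x)
    ((Polynomial.derivative p).continuous.intervalIntegrable _ _)

open Polynomial in
lemma pInt_step (n m : ℕ) (q : Polynomial ℝ) :
    ((n:ℝ)-m)*(n+m+1) * pInt ((1 - X^2)^m * legD n m * q)
      = pInt ((1 - X^2)^(m+1) * legD n (m+1) * derivative q) := by
  have h := pInt_deriv ((1 - X^2)^(m+1) * legD n (m+1) * q)
  have e : derivative ((1 - X^2)^(m+1) * legD n (m+1) * q) =
      C (-(((n:ℝ)-m)*(n+m+1))) * ((1 - X^2)^m * legD n m * q)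
      + (1 - X^2)^(m+1) * legD n (m+1) * derivative q := by
    have ho := legD_ode n m
    simp only [derivative_mul, derivative_C, derivative_pow, derivative_sub, derivative_one,
      derivative_X, legD_succ]
    simp only [map_mul, map_sub, map_add, map_neg, C_eq_natCast, map_one, map_ofNat] at ho ⊢
    norm_num at ho ⊢
    linear_combination ((1 - X^2)^m * q) * ho
  rw [e, pInt_add, pInt_C_mul] at h
  simp at h
  linarith

open Polynomial in
lemma pInt_orth (n : ℕ) : ∀ (d m : ℕ) (q : Polynomial ℝ), q.natDegree ≤ d → d + m < n →
    pInt ((1 - X^2)^m * legD n m * q) = 0 := by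
  intro d
  induction d with
  | zero =>
    intro m q hq hd
    have h := pInt_step n m q
    have : derivative q = 0 := by
      rw [Polynomial.eq_C_of_natDegree_le_zero hq]; simp
    rw [this, mul_zero] at h
    have h0 : pInt 0 = 0 := by simp [pInt]
    rw [h0] at h
    have hm : (m:ℝ) < n := by exact_mod_cast (by omega : m < n)
    have : ((n:ℝ)-m)*(n+m+1) ≠ 0 := by
      apply mul_ne_zero
      · linarith
      · positivity
    exact (mul_eq_zero.1 h).resolve_left this
  | succ d ih =>
    intro m q hq hd
    have h := pInt_step n m q
    rw [ih (m+1) (derivative q) ((natDegree_derivative_le q).trans (by omega)) (by omega)] at h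
    have hm : (m:ℝ) < n := by exact_mod_cast (by omega : m < n)
    have : ((n:ℝ)-m)*(n+m+1) ≠ 0 := by
      apply mul_ne_zero
      · linarith
      · positivity
    exact (mul_eq_zero.1 h).resolve_left this

open Polynomial in
lemma pInt_legT_eq (n : ℕ) : ∀ m, m ≤ n → pInt (legT n m) = pInt (legT n 0) := by
  intro m
  induction m with
  | zero => simp
  | succ m ih =>
    intro h
    rw [← ih (by omega)]
    have hs := pInt_step n m (legD n m)
    unfold legT
    rw [mul_assoc, mul_assoc, pInt_C_mul, pInt_C_mul, pow_two (legD n (m+1)), pow_two (legD n m),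
      ← mul_assoc, ← mul_assoc]
    rw [legD_succ] at hs
    rw [← hs, ← frat_succ (show m < n by omega)]
    ring

lemma pInt_sum {ι : Type*} (s : Finset ι) (f : ι → Polynomial ℝ) :
    pInt (∑ i ∈ s, f i) = ∑ i ∈ s, pInt (f i) := by
  classical
  induction s using Finset.induction_on with
  | empty => simp [pInt]
  | insert a s ha ih => rw [Finset.sum_insert ha, Finset.sum_insert ha, pInt_add, ih]

open Polynomial in
lemma pInt_legT (n m : ℕ) (h : m ≤ n) : pInt (legT n m) = 2 / (2*n+1) := by
  have h1 : legT n 0 + C 2 * ∑ m ∈ Finset.range n, legT n (m+1) = 1 := by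
    apply Polynomial.funext
    intro x
    have := legT_sum n x
    simpa [eval_finsetSum] using this
  have h2 := congrArg pInt h1
  rw [pInt_add, pInt_C_mul, pInt_sum, Finset.sum_congr rfl
    (fun m hm => pInt_legT_eq n (m+1) (Finset.mem_range.1 hm))] at h2
  have h3 : pInt 1 = 2 := by simp [pInt]; norm_num
  rw [h3] at h2
  simp at h2
  rw [pInt_legT_eq n m h]
  field_simp
  linarith

/-! The integral functional and the harmonics as continuous maps -/

def sTrig (m : ℤ) (φ : ℝ) : ℝ :=
  if m = 0 then 1 else if 0 < m then Real.cos ((m.natAbs : ℝ) * φ) else Real.sin ((m.natAbs : ℝ) * φ)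

def yN (n : ℕ) (m : ℤ) : ℝ :=
  if m = 0 then Real.sqrt ((2*(n:ℝ)+1)/(4*Real.pi))
  else Real.sqrt 2 * Real.sqrt ((2*(n:ℝ)+1)/(4*Real.pi) * frat n m.natAbs)

lemma yN_sq (n : ℕ) (m : ℤ) : yN n m ^ 2 =
    (if m = 0 then 1 else 2) * ((2*(n:ℝ)+1)/(4*Real.pi) * frat n m.natAbs) := by
  have := frat_pos n m.natAbs
  unfold yN
  split_ifs with h
  · subst h
    rw [Real.sq_sqrt (by positivity)]
    simp [frat, Nat.factorial_ne_zero]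
  · rw [mul_pow, Real.sq_sqrt (by positivity), Real.sq_sqrt (by positivity)]

lemma Ynm_eq (n : ℕ) (m : ℤ) (θ φ : ℝ) : Ynm n m θ φ =
    yN n m * |Real.sin θ| ^ m.natAbs * (legD n m.natAbs).eval (Real.cos θ) * sTrig m φ := by
  have hs : (1 - Real.cos θ ^ 2) ^ ((m.natAbs : ℝ)/2) = |Real.sin θ| ^ m.natAbs := by
    rw [← Real.sin_sq, ← sq_abs, ← Real.rpow_natCast, ← Real.rpow_mul (abs_nonneg _),
      ← Real.rpow_natCast]
    congr 1
    push_cast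
    ring
  have h1 : ((-1:ℝ)^m.natAbs)*((-1:ℝ)^m.natAbs) = 1 := by
    rw [← mul_pow]; simp
  unfold Ynm yN sTrig assocLegP
  rw [hs, iteratedDeriv_legP]
  by_cases h : m = 0
  · subst h
    simp [legP_eq]
  · rw [if_neg h, if_neg h, if_neg h]
    unfold frat
    split_ifs
    · linear_combination (Real.sqrt 2 *
      Real.sqrt ((2*(n:ℝ)+1)/(4*Real.pi) *
        ((Nat.factorial (n - m.natAbs) : ℝ) / (Nat.factorial (n + m.natAbs) : ℝ))) *
        |Real.sin θ| ^ m.natAbs * (legD n m.natAbs).eval (Real.cos θ) *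
        Real.cos ((m.natAbs : ℝ) * φ)) * h1
    · linear_combination (Real.sqrt 2 *
      Real.sqrt ((2*(n:ℝ)+1)/(4*Real.pi) *
        ((Nat.factorial (n - m.natAbs) : ℝ) / (Nat.factorial (n + m.natAbs) : ℝ))) *
        |Real.sin θ| ^ m.natAbs * (legD n m.natAbs).eval (Real.cos θ) *
        Real.sin ((m.natAbs : ℝ) * φ)) * h1

lemma sTrig_cont (m : ℤ) : Continuous (sTrig m) := by
  unfold sTrig
  split_ifs <;> fun_prop

def yC (n : ℕ) (m : ℤ) : C(ℝ × ℝ, ℝ) where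
  toFun p := yN n m * |Real.sin p.1| ^ m.natAbs * (legD n m.natAbs).eval (Real.cos p.1) * sTrig m p.2
  continuous_toFun := by
    have := sTrig_cont m
    have := (legD n m.natAbs).continuous
    fun_prop

lemma yC_apply (n : ℕ) (m : ℤ) (θ φ : ℝ) : yC n m (θ, φ) = Ynm n m θ φ := (Ynm_eq n m θ φ).symm

lemma inner_cont (f : C(ℝ × ℝ, ℝ)) :
    Continuous (fun φ => ∫ θ in (0:ℝ)..Real.pi, f (θ, φ) * Real.sin θ) := by
  apply intervalIntegral.continuous_parametric_intervalIntegral_of_continuous'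
  simp only [Function.uncurry_def]
  fun_prop

lemma inner_ii (f : C(ℝ × ℝ, ℝ)) (φ : ℝ) :
    IntervalIntegrable (fun θ => f (θ, φ) * Real.sin θ) volume 0 Real.pi := by
  apply Continuous.intervalIntegrable
  fun_prop

def eInt : C(ℝ × ℝ, ℝ) →ₗ[ℝ] ℝ where
  toFun f := ∫ φ in (0:ℝ)..(2*Real.pi), ∫ θ in (0:ℝ)..Real.pi, f (θ, φ) * Real.sin θ
  map_add' f g := by
    rw [← intervalIntegral.integral_add ((inner_cont f).intervalIntegrable _ _)
      ((inner_cont g).intervalIntegrable _ _)]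
    congr 1
    funext φ
    rw [← intervalIntegral.integral_add (inner_ii f φ) (inner_ii g φ)]
    simp [add_mul]
  map_smul' c f := by
    simp [mul_assoc]

lemma eInt_def (f : C(ℝ × ℝ, ℝ)) : eInt f =
    ∫ φ in (0:ℝ)..(2*Real.pi), ∫ θ in (0:ℝ)..Real.pi, f (θ, φ) * Real.sin θ := rfl

lemma eInt_congr {f g : C(ℝ × ℝ, ℝ)}
    (h : ∀ θ ∈ Set.Icc 0 Real.pi, ∀ φ ∈ Set.Icc 0 (2*Real.pi), f (θ, φ) = g (θ, φ)) :
    eInt f = eInt g := by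
  rw [eInt_def, eInt_def]
  apply intervalIntegral.integral_congr
  intro φ hφ
  apply intervalIntegral.integral_congr
  intro θ hθ
  rw [Set.uIcc_of_le (by positivity)] at hφ hθ
  simp only [h θ hθ φ hφ]

lemma eInt_mono {f g : C(ℝ × ℝ, ℝ)}
    (h : ∀ θ ∈ Set.Icc 0 Real.pi, ∀ φ ∈ Set.Icc 0 (2*Real.pi), f (θ, φ) ≤ g (θ, φ)) :
    eInt f ≤ eInt g := by
  rw [eInt_def, eInt_def]
  apply intervalIntegral.integral_mono_on (by positivity) ((inner_cont f).intervalIntegrable _ _)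
      ((inner_cont g).intervalIntegrable _ _)
  intro φ hφ
  apply intervalIntegral.integral_mono_on (by positivity) (inner_ii f φ) (inner_ii g φ)
  intro θ hθ
  exact mul_le_mul_of_nonneg_right (h θ hθ φ hφ) (Real.sin_nonneg_of_mem_Icc hθ)

lemma eInt_prod {f : C(ℝ × ℝ, ℝ)} (h t : ℝ → ℝ)
    (hf : ∀ θ φ, f (θ, φ) = h θ * t φ) :
    eInt f = (∫ θ in (0:ℝ)..Real.pi, h θ * Real.sin θ) * ∫ φ in (0:ℝ)..(2*Real.pi), t φ := by
  rw [eInt_def, ← intervalIntegral.integral_const_mul]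
  congr 1
  funext φ
  rw [← intervalIntegral.integral_mul_const]
  congr 1
  funext θ
  rw [hf]; ring

lemma int_cos_sub (p : Polynomial ℝ) (h : ℝ → ℝ)
    (hp : ∀ θ ∈ Set.Icc 0 Real.pi, h θ = p.eval (Real.cos θ)) :
    ∫ θ in (0:ℝ)..Real.pi, h θ * Real.sin θ = pInt p := by
  have h1 : ∫ θ in (0:ℝ)..Real.pi, h θ * Real.sin θ =
      - ∫ θ in (0:ℝ)..Real.pi, ((fun x => p.eval x) ∘ Real.cos) θ * (- Real.sin θ) := by
    rw [← intervalIntegral.integral_neg]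
    apply intervalIntegral.integral_congr
    intro θ hθ
    rw [Set.uIcc_of_le (by positivity)] at hθ
    simp [hp θ hθ]
  rw [h1, intervalIntegral.integral_comp_mul_deriv (fun x _ => Real.hasDerivAt_cos x)
    (by fun_prop) p.continuous]
  rw [Real.cos_zero, Real.cos_pi, intervalIntegral.integral_symm, neg_neg]
  rfl

lemma coeff_eq (f : C(ℝ × ℝ, ℝ)) (n : ℕ) (m : ℤ) :
    coeff (fun θ φ => f (θ, φ)) n m = eInt (f * yC n m) := by
  unfold coeff sInner
  rw [eInt_def]
  simp only [ContinuousMap.mul_apply, yC_apply]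

/-! Trigonometric integrals -/

lemma int_cos_l {l : ℤ} (hl : l ≠ 0) : ∫ φ in (0:ℝ)..(2*Real.pi), Real.cos (l * φ) = 0 := by
  have h : (l:ℝ) ≠ 0 := by exact_mod_cast hl
  rw [intervalIntegral.integral_comp_mul_left _ h]
  simp only [integral_cos, mul_zero, Real.sin_zero, sub_zero]
  have := Real.sin_int_mul_pi (2*l)
  push_cast at this
  rw [show (l:ℝ) * (2*Real.pi) = 2 * l * Real.pi by ring, this]
  simp

lemma int_sin_l (l : ℤ) : ∫ φ in (0:ℝ)..(2*Real.pi), Real.sin (l * φ) = 0 := by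
  by_cases hl : l = 0
  · simp [hl]
  have h : (l:ℝ) ≠ 0 := by exact_mod_cast hl
  rw [intervalIntegral.integral_comp_mul_left _ h]
  simp only [integral_sin, mul_zero, Real.cos_zero]
  rw [show (l:ℝ) * (2*Real.pi) = l * (2 * Real.pi) by ring, Real.cos_int_mul_two_pi]
  simp

lemma sTrig_cases (m : ℤ) : (0 ≤ m ∧ sTrig m = fun φ => Real.cos (((m.natAbs:ℤ):ℝ) * φ)) ∨
    (m < 0 ∧ sTrig m = fun φ => Real.sin (((m.natAbs:ℤ):ℝ) * φ)) := by
  rcases lt_or_ge m 0 with h | h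
  · right
    refine ⟨h, ?_⟩
    funext φ
    unfold sTrig
    rw [if_neg (by omega), if_neg (by omega)]
    norm_num
  · left
    refine ⟨h, ?_⟩
    funext φ
    unfold sTrig
    by_cases h0 : m = 0
    · simp [h0]
    · rw [if_neg h0, if_pos (by omega)]
      norm_num

lemma ii_cos (l : ℤ) : IntervalIntegrable (fun φ : ℝ => Real.cos (l*φ)) volume 0 (2*Real.pi) := by
  apply Continuous.intervalIntegrable; fun_prop
lemma ii_sin (l : ℤ) : IntervalIntegrable (fun φ : ℝ => Real.sin (l*φ)) volume 0 (2*Real.pi) := by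
  apply Continuous.intervalIntegrable; fun_prop

lemma int_cos_cos (a b : ℤ) : ∫ φ in (0:ℝ)..(2*Real.pi), Real.cos (a * φ) * Real.cos (b * φ) =
    ((∫ φ in (0:ℝ)..(2*Real.pi), Real.cos ((a+b : ℤ) * φ)) +
      ∫ φ in (0:ℝ)..(2*Real.pi), Real.cos ((a-b : ℤ) * φ)) / 2 := by
  rw [← intervalIntegral.integral_add (ii_cos _) (ii_cos _), ← intervalIntegral.integral_div]
  congr 1; funext φ; push_cast
  rw [add_mul, sub_mul, Real.cos_add, Real.cos_sub]; ring

lemma int_sin_sin (a b : ℤ) : ∫ φ in (0:ℝ)..(2*Real.pi), Real.sin (a * φ) * Real.sin (b * φ) =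
    ((∫ φ in (0:ℝ)..(2*Real.pi), Real.cos ((a-b : ℤ) * φ)) -
      ∫ φ in (0:ℝ)..(2*Real.pi), Real.cos ((a+b : ℤ) * φ)) / 2 := by
  rw [← intervalIntegral.integral_sub (ii_cos _) (ii_cos _), ← intervalIntegral.integral_div]
  congr 1; funext φ; push_cast
  rw [add_mul, sub_mul, Real.cos_add, Real.cos_sub]; ring

lemma int_sin_cos (a b : ℤ) :
    ∫ φ in (0:ℝ)..(2*Real.pi), Real.sin (a * φ) * Real.cos (b * φ) = 0 := by
  have : ∫ φ in (0:ℝ)..(2*Real.pi), Real.sin (a * φ) * Real.cos (b * φ) =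
    ((∫ φ in (0:ℝ)..(2*Real.pi), Real.sin ((a+b : ℤ) * φ)) +
      ∫ φ in (0:ℝ)..(2*Real.pi), Real.sin ((a-b : ℤ) * φ)) / 2 := by
    rw [← intervalIntegral.integral_add (ii_sin _) (ii_sin _), ← intervalIntegral.integral_div]
    congr 1; funext φ; push_cast
    rw [add_mul, sub_mul, Real.sin_add, Real.sin_sub]; ring
  rw [this, int_sin_l, int_sin_l]; simp

lemma int_sTrig_cos (m l : ℤ) (h : l.natAbs ≠ m.natAbs) :
    ∫ φ in (0:ℝ)..(2*Real.pi), sTrig m φ * Real.cos (l * φ) = 0 := by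
  rcases sTrig_cases m with ⟨h1, h2⟩ | ⟨h1, h2⟩
  · rw [h2]; simp only []
    rw [int_cos_cos, int_cos_l (by omega), int_cos_l (by omega)]; simp
  · rw [h2]; simp only []
    rw [int_sin_cos]

lemma int_sTrig_sin (m l : ℤ) (h : l.natAbs ≠ m.natAbs) :
    ∫ φ in (0:ℝ)..(2*Real.pi), sTrig m φ * Real.sin (l * φ) = 0 := by
  rcases sTrig_cases m with ⟨h1, h2⟩ | ⟨h1, h2⟩
  · rw [h2]; simp only []
    simp_rw [mul_comm (Real.cos _)]
    rw [int_sin_cos]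
  · rw [h2]; simp only []
    rw [int_sin_sin, int_cos_l (by omega), int_cos_l (by omega)]; simp

lemma int_sTrig_orth (m l : ℤ) (h : m ≠ l) :
    ∫ φ in (0:ℝ)..(2*Real.pi), sTrig m φ * sTrig l φ = 0 := by
  by_cases hn : l.natAbs = m.natAbs
  · rcases sTrig_cases m with ⟨h1, h2⟩ | ⟨h1, h2⟩ <;>
    rcases sTrig_cases l with ⟨h3, h4⟩ | ⟨h3, h4⟩
    · omega
    · rw [h2, h4]; simp only []
      simp_rw [mul_comm (Real.cos _)]
      rw [int_sin_cos]
    · rw [h2, h4]; simp only []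
      rw [int_sin_cos]
    · omega
  · rcases sTrig_cases l with ⟨h3, h4⟩ | ⟨h3, h4⟩
    · rw [h4]; exact int_sTrig_cos m _ (by omega)
    · rw [h4]; exact int_sTrig_sin m _ (by omega)

lemma int_sTrig_sq (m : ℤ) :
    (if m = 0 then 1 else 2) * ∫ φ in (0:ℝ)..(2*Real.pi), sTrig m φ * sTrig m φ = 2*Real.pi := by
  by_cases h : m = 0
  · subst h; simp [sTrig]
  rw [if_neg h]
  rcases sTrig_cases m with ⟨h1, h2⟩ | ⟨h1, h2⟩
  · rw [h2]; simp only []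
    rw [int_cos_cos, int_cos_l (by omega)]; simp
  · rw [h2]; simp only []
    rw [int_sin_sin, int_cos_l (l := _ + _) (by omega)]; simp

lemma int_sTrig_three (a b m : ℤ) (h1 : m.natAbs ≠ a.natAbs + b.natAbs)
    (h2 : ((a.natAbs : ℤ) - b.natAbs).natAbs ≠ m.natAbs) :
    ∫ φ in (0:ℝ)..(2*Real.pi), sTrig a φ * sTrig b φ * sTrig m φ = 0 := by
  have key : ∃ (F G : ℝ → ℝ) (c : ℝ), (∀ φ, sTrig a φ * sTrig b φ = (F φ + c * G φ)/2) ∧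
     Continuous F ∧ Continuous G ∧
     (∫ φ in (0:ℝ)..(2*Real.pi), sTrig m φ * F φ = 0) ∧
     (∫ φ in (0:ℝ)..(2*Real.pi), sTrig m φ * G φ = 0) := by
    have hp : ((a.natAbs:ℤ) + b.natAbs).natAbs ≠ m.natAbs := by omega
    rcases sTrig_cases a with ⟨ha, ha'⟩ | ⟨ha, ha'⟩ <;>
    rcases sTrig_cases b with ⟨hb, hb'⟩ | ⟨hb, hb'⟩
    · refine ⟨_, _, 1, ?_, ?_, ?_, int_sTrig_cos m _ hp, int_sTrig_cos m _ h2⟩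
      · intro φ; rw [ha', hb']; simp only []; push_cast
        rw [add_mul, sub_mul, Real.cos_add, Real.cos_sub]; ring
      · fun_prop
      · fun_prop
    · refine ⟨_, _, -1, ?_, ?_, ?_, int_sTrig_sin m _ hp, int_sTrig_sin m _ h2⟩
      · intro φ; rw [ha', hb']; simp only []; push_cast
        rw [add_mul, sub_mul, Real.sin_add, Real.sin_sub]; ring
      · fun_prop
      · fun_prop
    · refine ⟨_, _, 1, ?_, ?_, ?_, int_sTrig_sin m _ hp, int_sTrig_sin m _ h2⟩
      · intro φ; rw [ha', hb']; simp only []; push_cast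
        rw [add_mul, sub_mul, Real.sin_add, Real.sin_sub]; ring
      · fun_prop
      · fun_prop
    · refine ⟨_, _, -1, ?_, ?_, ?_, int_sTrig_cos m _ h2, int_sTrig_cos m _ hp⟩
      · intro φ; rw [ha', hb']; simp only []; push_cast
        rw [add_mul, sub_mul, Real.cos_add, Real.cos_sub]; ring
      · fun_prop
      · fun_prop
  obtain ⟨F, G, c, hFG, hF, hG, h3, h4⟩ := key
  have hm := sTrig_cont m
  have : ∀ φ, sTrig a φ * sTrig b φ * sTrig m φ = (1/2) * (sTrig m φ * F φ) + (c/2) * (sTrig m φ * G φ) := by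
    intro φ; rw [hFG]; ring
  simp_rw [this]
  rw [intervalIntegral.integral_add, intervalIntegral.integral_const_mul,
    intervalIntegral.integral_const_mul, h3, h4]
  · simp
  · apply Continuous.intervalIntegrable; fun_prop
  · apply Continuous.intervalIntegrable; fun_prop

/-! Orthonormality -/

lemma yC_prod2 (n n' : ℕ) (m m' : ℤ) : eInt (yC n m * yC n' m') =
    (∫ θ in (0:ℝ)..Real.pi, (yN n m * yN n' m' * (|Real.sin θ| ^ (m.natAbs + m'.natAbs) *
      (legD n m.natAbs).eval (Real.cos θ) * (legD n' m'.natAbs).eval (Real.cos θ))) * Real.sin θ) *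
      ∫ φ in (0:ℝ)..(2*Real.pi), sTrig m φ * sTrig m' φ := by
  apply eInt_prod
  intro θ φ
  simp only [ContinuousMap.mul_apply, yC, ContinuousMap.coe_mk]
  ring

lemma abs_sin_even {θ : ℝ} (j : ℕ) :
    |Real.sin θ| ^ (2*j) = (1 - Real.cos θ ^2)^j := by
  rw [pow_mul, sq_abs, Real.sin_sq]

open Polynomial in
lemma yC_orth_aux (n n' : ℕ) (m : ℤ) (hn : n' < n) (h' : m.natAbs ≤ n') :
    eInt (yC n m * yC n' m) = 0 := by
  rw [yC_prod2, int_cos_sub (C (yN n m * yN n' m) * ((1 - X^2)^m.natAbs * legD n m.natAbs * legD n' m.natAbs)),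
    pInt_C_mul, pInt_orth n (n' - m.natAbs) m.natAbs _ (natDegree_legD _ _) (by omega)]
  · simp
  · intro θ _
    rw [← two_mul, abs_sin_even]
    simp

lemma yC_orth (n n' : ℕ) (m m' : ℤ) (h : m.natAbs ≤ n) (h' : m'.natAbs ≤ n')
    (hne : (n, m) ≠ (n', m')) : eInt (yC n m * yC n' m') = 0 := by
  by_cases hm : m = m'
  · subst hm
    have hn : n ≠ n' := fun h => hne (by rw [h])
    rcases lt_or_gt_of_ne hn with hn | hn
    · rw [mul_comm]; exact yC_orth_aux _ _ _ hn h
    · exact yC_orth_aux _ _ _ hn h'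
  · rw [yC_prod2, int_sTrig_orth _ _ hm, mul_zero]

open Polynomial in
lemma yC_norm (n : ℕ) (m : ℤ) (h : m.natAbs ≤ n) : eInt (yC n m * yC n m) = 1 := by
  rw [yC_prod2, int_cos_sub (C ((if m = 0 then 1 else 2) * ((2*(n:ℝ)+1)/(4*Real.pi))) * legT n m.natAbs),
    pInt_C_mul, pInt_legT n _ h]
  · have := int_sTrig_sq m
    have hp := Real.pi_pos
    rw [show (if m = 0 then (1:ℝ) else 2) * ((2*(n:ℝ)+1)/(4*Real.pi)) * (2/(2*n+1)) *
      (∫ φ in (0:ℝ)..(2*Real.pi), sTrig m φ * sTrig m φ) = ((if m = 0 then (1:ℝ) else 2) *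
      (∫ φ in (0:ℝ)..(2*Real.pi), sTrig m φ * sTrig m φ)) * (((2*(n:ℝ)+1)/(4*Real.pi)) * (2/(2*n+1))) by ring, this]
    field_simp
    norm_num
  · intro θ _
    rw [← two_mul, abs_sin_even, ← pow_two, yN_sq]
    simp [legT]
    ring

lemma yC_sel (n1 n2 n : ℕ) (m1 m2 m : ℤ) (h1 : m1.natAbs ≤ n1) (h2 : m2.natAbs ≤ n2)
    (hn : n1 + n2 < n) :
    eInt (yC n1 m1 * yC n2 m2 * yC n m) = 0 := by
  have hp : eInt (yC n1 m1 * yC n2 m2 * yC n m) =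
    (∫ θ in (0:ℝ)..Real.pi, (yN n1 m1 * yN n2 m2 * yN n m *
      (|Real.sin θ| ^ (m1.natAbs + m2.natAbs + m.natAbs) *
      (legD n1 m1.natAbs).eval (Real.cos θ) * (legD n2 m2.natAbs).eval (Real.cos θ) *
      (legD n m.natAbs).eval (Real.cos θ))) * Real.sin θ) *
      ∫ φ in (0:ℝ)..(2*Real.pi), sTrig m1 φ * sTrig m2 φ * sTrig m φ := by
    apply eInt_prod
    intro θ φ
    simp only [ContinuousMap.mul_apply, yC, ContinuousMap.coe_mk]
    ring
  rw [hp]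
  by_cases hc : m.natAbs ≠ m1.natAbs + m2.natAbs ∧ ((m1.natAbs : ℤ) - m2.natAbs).natAbs ≠ m.natAbs
  · rw [int_sTrig_three _ _ _ hc.1 hc.2, mul_zero]
  · obtain ⟨j, hj⟩ : ∃ j, m1.natAbs + m2.natAbs = m.natAbs + 2*j := by
      by_cases h : m.natAbs = m1.natAbs + m2.natAbs
      · exact ⟨0, by omega⟩
      · have h3 : ((m1.natAbs : ℤ) - m2.natAbs).natAbs = m.natAbs := by
          by_contra h4
          exact hc ⟨h, h4⟩
        exact ⟨min m1.natAbs m2.natAbs, by omega⟩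
    rw [int_cos_sub (Polynomial.C (yN n1 m1 * yN n2 m2 * yN n m) * ((1 - Polynomial.X^2)^m.natAbs * legD n m.natAbs *
      ((1 - Polynomial.X^2)^j * legD n1 m1.natAbs * legD n2 m2.natAbs)))]
    · rw [pInt_C_mul, pInt_orth n (2*j + (n1 - m1.natAbs) + (n2 - m2.natAbs)) m.natAbs]
      · simp
      · refine Polynomial.natDegree_mul_le_of_le (Polynomial.natDegree_mul_le_of_le ?_ (natDegree_legD _ _)) (natDegree_legD _ _)
        rw [mul_comm]
        refine Polynomial.natDegree_pow_le_of_le j ?_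
        compute_degree
      · omega
    · intro θ _
      rw [hj, show m.natAbs + 2*j + m.natAbs = 2*(m.natAbs + j) by ring, abs_sin_even, pow_add]
      simp only [Polynomial.eval_mul, Polynomial.eval_C, Polynomial.eval_pow,
        Polynomial.eval_sub, Polynomial.eval_one, Polynomial.eval_X]
      ring

lemma sum_Icc_symm (n : ℕ) (f : ℤ → ℝ) :
    ∑ m ∈ Finset.Icc (-(n:ℤ)) n, f m = f 0 + ∑ j ∈ Finset.range n, (f ((j:ℤ)+1) + f (-((j:ℤ)+1))) := by
  induction n with
  | zero => simp
  | succ n ih =>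
    rw [Finset.sum_range_succ, ← add_assoc, ← ih]
    have : Finset.Icc (-((n+1:ℕ):ℤ)) ((n+1:ℕ):ℤ) =
        insert ((n:ℤ)+1) (insert (-((n:ℤ)+1)) (Finset.Icc (-(n:ℤ)) n)) := by
      ext x; simp; omega
    rw [this, Finset.sum_insert, Finset.sum_insert]
    · ring
    · simp
    · simp; omega

lemma yC_sum_sq (n : ℕ) (p : ℝ × ℝ) :
    ∑ m ∈ Finset.Icc (-(n:ℤ)) n, (yC n m p)^2 = (2*n+1)/(4*Real.pi) := by
  obtain ⟨θ, φ⟩ := p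
  have h := legT_sum n (Real.cos θ)
  rw [sum_Icc_symm]
  have e0 : (yC n 0 (θ, φ))^2 = (2*n+1)/(4*Real.pi) * (legT n 0).eval (Real.cos θ) := by
    simp only [yC, ContinuousMap.coe_mk, mul_pow, yN_sq]
    simp [legT, sTrig]
    ring
  have e1 : ∀ j : ℕ, (yC n ((j:ℤ)+1) (θ, φ))^2 + (yC n (-((j:ℤ)+1)) (θ, φ))^2 =
      (2*n+1)/(4*Real.pi) * (2 * (legT n (j+1)).eval (Real.cos θ)) := by
    intro j
    have n1 : ((j:ℤ)+1).natAbs = j+1 := by omega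
    have n2 : (-((j:ℤ)+1)).natAbs = j+1 := by omega
    simp only [yC, ContinuousMap.coe_mk, mul_pow, yN_sq]
    rw [n1, n2, if_neg (by omega), if_neg (by omega)]
    have t1 : sTrig ((j:ℤ)+1) φ = Real.cos (((j+1:ℕ):ℝ) * φ) := by
      unfold sTrig
      rw [if_neg (by omega), if_pos (by omega), n1]
    have t2 : sTrig (-((j:ℤ)+1)) φ = Real.sin (((j+1:ℕ):ℝ) * φ) := by
      unfold sTrig
      rw [if_neg (by omega), if_neg (by omega), n2]
    rw [t1, t2, ← pow_mul, mul_comm (j+1) 2, abs_sin_even]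
    simp only [legT, Polynomial.eval_mul, Polynomial.eval_C, Polynomial.eval_pow,
      Polynomial.eval_sub, Polynomial.eval_one, Polynomial.eval_X]
    have := Real.sin_sq_add_cos_sq (((j+1:ℕ):ℝ) * φ)
    linear_combination (2 * ((2*(n:ℝ)+1)/(4*Real.pi) * frat n (j+1)) * (1 - Real.cos θ^2)^(j+1) *
      (legD n (j+1)).eval (Real.cos θ)^2) * this
  rw [e0, Finset.sum_congr rfl (fun j _ => e1 j), ← Finset.mul_sum, ← Finset.mul_sum, ← mul_add, h, mul_one]

/-! The finite inequality -/

abbrev idx (n : ℕ) : Finset ℤ := Finset.Icc (-(n:ℤ)) n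

lemma mem_idx {n : ℕ} {m : ℤ} : m ∈ idx n ↔ m.natAbs ≤ n := by
  simp only [idx, Finset.mem_Icc]; omega

def sproj (a : ℕ → ℤ → ℝ) (n : ℕ) : C(ℝ × ℝ, ℝ) := ∑ m ∈ idx n, a n m • yC n m

def asq (a : ℕ → ℤ → ℝ) (n : ℕ) : ℝ := ∑ m ∈ idx n, (a n m)^2

def gw (k lam : ℝ) (n : ℕ) : ℝ := (muSp n) ^ k * Real.exp (2*lam*Real.sqrt (muSp n))

lemma asq_nonneg (a : ℕ → ℤ → ℝ) (n : ℕ) : 0 ≤ asq a n := Finset.sum_nonneg (fun _ _ => sq_nonneg _)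

lemma muSp_pos (n : ℕ) : 0 < muSp n := by unfold muSp; positivity

lemma gw_pos (k lam : ℝ) (n : ℕ) : 0 < gw k lam n := by
  have := muSp_pos n
  unfold gw; positivity

lemma sproj_apply (a : ℕ → ℤ → ℝ) (n : ℕ) (p : ℝ × ℝ) :
    sproj a n p = ∑ m ∈ idx n, a n m * yC n m p := by
  simp [sproj, ContinuousMap.sum_apply]

lemma sproj_sup (a : ℕ → ℤ → ℝ) (n : ℕ) (p : ℝ × ℝ) :
    (sproj a n p)^2 ≤ asq a n * ((2*n+1)/(4*Real.pi)) := by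
  rw [sproj_apply, ← yC_sum_sq n p]
  exact Finset.sum_mul_sq_le_sq_mul_sq _ _ _

lemma eInt_sq_nonneg (f : C(ℝ × ℝ, ℝ)) : 0 ≤ eInt (f * f) := by
  rw [← map_zero eInt]
  apply eInt_mono
  intro θ _ φ _
  simp only [ContinuousMap.zero_apply, ContinuousMap.mul_apply]
  exact mul_self_nonneg _

lemma yC_on (n n' : ℕ) (m m' : ℤ) (h : m ∈ idx n) (h' : m' ∈ idx n') :
    eInt (yC n m * yC n' m') = if n = n' ∧ m = m' then 1 else 0 := by
  rw [mem_idx] at h h'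
  split_ifs with hh
  · obtain ⟨rfl, rfl⟩ := hh
    exact yC_norm n m h
  · exact yC_orth n n' m m' h h' (by simpa using hh)

lemma eInt_sproj_mul (a : ℕ → ℤ → ℝ) (n n' : ℕ) (m : ℤ) (h : m ∈ idx n') :
    eInt (sproj a n * yC n' m) = if n = n' then a n m else 0 := by
  unfold sproj
  rw [Finset.sum_mul, map_sum]
  simp only [smul_mul_assoc, map_smul, smul_eq_mul]
  split_ifs with hh
  · subst hh
    rw [Finset.sum_eq_single m]
    · rw [yC_on _ _ _ _ h h]; simp
    · intro b hb hne
      rw [yC_on _ _ _ _ hb h]; simp [hne]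
    · exact fun h' => absurd h h'
  · apply Finset.sum_eq_zero
    intro b hb
    rw [yC_on _ _ _ _ hb h]; simp [hh]

lemma eInt_sproj_sproj (a b : ℕ → ℤ → ℝ) (n n' : ℕ) :
    eInt (sproj a n * sproj b n') = if n = n' then ∑ m ∈ idx n, a n m * b n m else 0 := by
  conv_lhs => rw [sproj.eq_def b]
  rw [Finset.mul_sum, map_sum]
  simp only [mul_smul_comm, map_smul, smul_eq_mul]
  rw [Finset.sum_congr rfl (fun m hm => by rw [eInt_sproj_mul a n n' m hm])]
  split_ifs with h
  · subst h
    exact Finset.sum_congr rfl (fun m _ => mul_comm _ _)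
  · simp

lemma eInt_sum_sq (a : ℕ → ℤ → ℝ) (S : Finset ℕ) :
    eInt ((∑ n ∈ S, sproj a n) * (∑ n ∈ S, sproj a n)) = ∑ n ∈ S, asq a n := by
  rw [Finset.sum_mul_sum, map_sum]
  simp only [map_sum, eInt_sproj_sproj]
  refine Finset.sum_congr rfl (fun n hn => ?_)
  rw [Finset.sum_ite_eq, if_pos hn]
  exact Finset.sum_congr rfl (fun m _ => (sq _).symm)

lemma bessel (f : C(ℝ × ℝ, ℝ)) (n : ℕ) :
    ∑ m ∈ idx n, (eInt (f * yC n m))^2 ≤ eInt (f * f) := by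
  set c : ℕ → ℤ → ℝ := fun n m => eInt (f * yC n m) with hc
  have h := eInt_sq_nonneg (f - sproj c n)
  have e : (f - sproj c n) * (f - sproj c n) = f * f - (2:ℝ) • (f * sproj c n) + sproj c n * sproj c n := by
    rw [two_smul]; ring
  have e2 : eInt (f * sproj c n) = ∑ m ∈ idx n, (eInt (f * yC n m))^2 := by
    unfold sproj
    rw [Finset.mul_sum, map_sum]
    simp only [mul_smul_comm, map_smul, smul_eq_mul]
    exact Finset.sum_congr rfl (fun m _ => (sq _).symm)
  have e3 : eInt (sproj c n * sproj c n) = ∑ m ∈ idx n, (eInt (f * yC n m))^2 := by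
    rw [eInt_sproj_sproj, if_pos rfl]
    exact Finset.sum_congr rfl (fun m _ => (sq _).symm)
  rw [e, map_add, map_sub, map_smul, e2, e3, smul_eq_mul] at h
  linarith

lemma yC_sel' (n1 n2 n : ℕ) (m1 m2 m : ℤ) (h1 : m1 ∈ idx n1) (h2 : m2 ∈ idx n2) (h : m ∈ idx n)
    (hn : ¬ (n ≤ n1 + n2 ∧ n2 ≤ n + n1 ∧ n1 ≤ n + n2)) :
    eInt (yC n1 m1 * yC n2 m2 * yC n m) = 0 := by
  rw [mem_idx] at h h1 h2
  by_cases c1 : n1 + n2 < n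
  · exact yC_sel _ _ _ _ _ _ h1 h2 c1
  by_cases c2 : n + n1 < n2
  · rw [show yC n1 m1 * yC n2 m2 * yC n m = yC n m * yC n1 m1 * yC n2 m2 by ring]
    exact yC_sel _ _ _ _ _ _ h h1 c2
  · rw [show yC n1 m1 * yC n2 m2 * yC n m = yC n m * yC n2 m2 * yC n1 m1 by ring]
    exact yC_sel _ _ _ _ _ _ h h2 (by omega)

lemma sproj_sel (a b : ℕ → ℤ → ℝ) (n1 n2 n : ℕ) (m : ℤ) (h : m ∈ idx n)
    (hn : ¬ (n ≤ n1 + n2 ∧ n2 ≤ n + n1 ∧ n1 ≤ n + n2)) :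
    eInt (sproj a n1 * sproj b n2 * yC n m) = 0 := by
  unfold sproj
  rw [Finset.sum_mul_sum, Finset.sum_mul, map_sum]
  refine Finset.sum_eq_zero (fun m1 h1 => ?_)
  rw [Finset.sum_mul, map_sum]
  refine Finset.sum_eq_zero (fun m2 h2 => ?_)
  simp only [smul_mul_assoc, mul_smul_comm, map_smul]
  rw [yC_sel' _ _ _ _ _ _ h1 h2 h hn]
  simp

lemma eInt_mul_bound (a : ℕ → ℤ → ℝ) (n : ℕ) (g : C(ℝ × ℝ, ℝ)) :
    eInt ((sproj a n * g) * (sproj a n * g)) ≤ asq a n * ((2*n+1)/(4*Real.pi)) * eInt (g * g) := by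
  rw [show asq a n * ((2*n+1)/(4*Real.pi)) * eInt (g * g) =
    eInt ((asq a n * ((2*n+1)/(4*Real.pi))) • (g * g)) by rw [map_smul, smul_eq_mul]]
  apply eInt_mono
  intro θ _ φ _
  simp only [ContinuousMap.mul_apply, ContinuousMap.smul_apply, smul_eq_mul]
  have := sproj_sup a n (θ, φ)
  nlinarith [mul_le_mul_of_nonneg_right this (mul_self_nonneg (g (θ, φ)))]

lemma gw_le (k lam : ℝ) (hk : 0 ≤ k) (hl : 0 ≤ lam) (n n1 n2 : ℕ) (h : n ≤ 2 * n2) (h' : n ≤ n1 + n2) :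
    gw k lam n ≤ 4 ^ k * Real.exp (2*lam*Real.sqrt (muSp n1)) * gw k lam n2 := by
  have h1 : muSp n ≤ 4 * muSp n2 := by
    unfold muSp
    have : (n:ℝ) ≤ 2 * n2 := by exact_mod_cast h
    have : (0:ℝ) ≤ n := by positivity
    nlinarith
  have h2 : Real.sqrt (muSp n) ≤ Real.sqrt (muSp n1) + Real.sqrt (muSp n2) := by
    rw [Real.sqrt_le_left (by positivity)]
    have s1 := Real.sq_sqrt (muSp_pos n1).le
    have s2 := Real.sq_sqrt (muSp_pos n2).le
    have b1 : (n1:ℝ) ≤ Real.sqrt (muSp n1) := by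
      apply Real.le_sqrt_of_sq_le
      unfold muSp
      have : (0:ℝ) ≤ n1 := by positivity
      nlinarith
    have b2 : (n2:ℝ) ≤ Real.sqrt (muSp n2) := by
      apply Real.le_sqrt_of_sq_le
      unfold muSp
      have : (0:ℝ) ≤ n2 := by positivity
      nlinarith
    have b3 : (n1:ℝ) * n2 ≤ Real.sqrt (muSp n1) * Real.sqrt (muSp n2) := by gcongr
    have b4 : (n:ℝ) ≤ n1 + n2 := by exact_mod_cast h'
    have b5 : (0:ℝ) ≤ n := by positivity
    rw [add_sq, s1, s2]
    have b6 : (n:ℝ) * (n+1) ≤ (n1+n2) * (n1 + n2 + 1) := by gcongr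
    unfold muSp at b3 ⊢
    nlinarith
  unfold gw
  have e1 : muSp n ^ k ≤ 4 ^ k * muSp n2 ^ k := by
    rw [← Real.mul_rpow (by norm_num) (muSp_pos n2).le]
    exact Real.rpow_le_rpow (muSp_pos n).le h1 hk
  have e2 : Real.exp (2*lam*Real.sqrt (muSp n)) ≤
      Real.exp (2*lam*Real.sqrt (muSp n1)) * Real.exp (2*lam*Real.sqrt (muSp n2)) := by
    rw [← Real.exp_add]
    apply Real.exp_le_exp.2
    nlinarith
  have := muSp_pos n2
  calc _ ≤ (4 ^ k * muSp n2 ^ k) * (Real.exp (2*lam*Real.sqrt (muSp n1)) * Real.exp (2*lam*Real.sqrt (muSp n2))) := by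
        gcongr
    _ = _ := by ring

def zw (k : ℝ) (n : ℕ) : ℝ := (2*n+1)^2 / (muSp n)^k

lemma zw_pos (k : ℝ) (n : ℕ) : 0 < zw k n := by
  have := muSp_pos n
  unfold zw; positivity

lemma card_bound (T : Finset ℕ) (n1 n2 : ℕ) (P : ℕ → Prop) [DecidablePred P]
    (hP : ∀ n, P n → n ≤ n1 + n2 ∧ n2 ≤ n + n1) :
    ((T.filter P).card : ℝ) ≤ 2 * n1 + 1 := by
  have : (T.filter P) ⊆ Finset.Icc (n2 - n1) (n2 + n1) := by
    intro n hn
    have := hP n (Finset.mem_filter.1 hn).2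
    simp only [Finset.mem_Icc]
    omega
  have h := Finset.card_le_card this
  rw [Nat.card_Icc] at h
  have : (T.filter P).card ≤ 2 * n1 + 1 := by omega
  exact_mod_cast this

lemma half_bound (k lam : ℝ) (hk : 0 ≤ k) (hl : 0 ≤ lam) (Z : ℝ)
    (hZ : ∀ I : Finset ℕ, ∑ n ∈ I, zw k n ≤ Z) (a b : ℕ → ℤ → ℝ) (I T : Finset ℕ)
    (R : ℕ → ℕ → ℕ → Prop) [∀ n n1, DecidablePred (R n n1)]
    (hR : ∀ n n1 n2, R n n1 n2 → n ≤ 2 * n2 ∧ n ≤ n1 + n2 ∧ n2 ≤ n + n1) :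
    ∑ n ∈ T, gw k lam n * ∑ m ∈ idx n, (∑ n1 ∈ I,
      eInt (sproj a n1 * (∑ n2 ∈ I.filter (R n n1), sproj b n2) * yC n m))^2
    ≤ Z * (4^k / (4*Real.pi)) * (∑ n ∈ I, gw k lam n * asq a n) * (∑ n ∈ I, gw k lam n * asq b n) := by
  classical
  set P : ℕ → ℕ → ℤ → ℝ := fun n n1 m =>
    eInt (sproj a n1 * (∑ n2 ∈ I.filter (R n n1), sproj b n2) * yC n m) with hP
  have hZ0 : 0 ≤ Z := by simpa using hZ ∅
  -- Bessel bound
  have hB : ∀ n n1, ∑ m ∈ idx n, (P n n1 m)^2 ≤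
      asq a n1 * ((2*n1+1)/(4*Real.pi)) * ∑ n2 ∈ I.filter (R n n1), asq b n2 := by
    intro n n1
    refine (bessel _ n).trans ((eInt_mul_bound _ _ _).trans ?_)
    rw [eInt_sum_sq]
  -- Cauchy-Schwarz
  have hCS : ∀ n m, (∑ n1 ∈ I, P n n1 m)^2 ≤ Z * ∑ n1 ∈ I, (P n n1 m)^2 / zw k n1 := by
    intro n m
    refine (Finset.sum_sq_le_sum_mul_sum_of_sq_le_mul I (f := fun n1 => zw k n1)
      (g := fun n1 => (P n n1 m)^2 / zw k n1) (fun i _ => (zw_pos k i).le)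
      (fun i _ => div_nonneg (sq_nonneg _) (zw_pos k i).le) ?_).trans ?_
    · intro i _
      have := (zw_pos k i).ne'
      apply le_of_eq
      field_simp
    · exact mul_le_mul_of_nonneg_right (hZ I)
        (Finset.sum_nonneg (fun i _ => div_nonneg (sq_nonneg _) (zw_pos k i).le))
  have hN : ∀ n1, ∑ n ∈ T, gw k lam n * ∑ m ∈ idx n, (P n n1 m)^2 ≤
      asq a n1 * ((2*n1+1)/(4*Real.pi)) * (4 ^ k * Real.exp (2*lam*Real.sqrt (muSp n1))) *
        ((2 * n1 + 1) * ∑ n ∈ I, gw k lam n * asq b n) := by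
    intro n1
    have hA : 0 ≤ asq a n1 * ((2*n1+1)/(4*Real.pi)) := by
      have := asq_nonneg a n1
      positivity
    have s1 : ∀ n ∈ T, gw k lam n * ∑ m ∈ idx n, (P n n1 m)^2 ≤
        asq a n1 * ((2*n1+1)/(4*Real.pi)) * (4 ^ k * Real.exp (2*lam*Real.sqrt (muSp n1))) *
        ∑ n2 ∈ I.filter (R n n1), gw k lam n2 * asq b n2 := by
      intro n _
      calc _ ≤ gw k lam n * (asq a n1 * ((2*n1+1)/(4*Real.pi)) * ∑ n2 ∈ I.filter (R n n1), asq b n2) :=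
            mul_le_mul_of_nonneg_left (hB n n1) (gw_pos _ _ _).le
        _ = asq a n1 * ((2*n1+1)/(4*Real.pi)) * ∑ n2 ∈ I.filter (R n n1), gw k lam n * asq b n2 := by
            rw [← Finset.mul_sum]; ring
        _ ≤ asq a n1 * ((2*n1+1)/(4*Real.pi)) * ∑ n2 ∈ I.filter (R n n1),
              (4 ^ k * Real.exp (2*lam*Real.sqrt (muSp n1)) * gw k lam n2) * asq b n2 := by
            refine mul_le_mul_of_nonneg_left (Finset.sum_le_sum (fun n2 h2 => ?_)) hA
            obtain ⟨r1, r2, r3⟩ := hR n n1 n2 (Finset.mem_filter.1 h2).2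
            exact mul_le_mul_of_nonneg_right (gw_le k lam hk hl n n1 n2 r1 r2) (asq_nonneg _ _)
        _ = _ := by
            rw [mul_assoc (asq a n1 * _), Finset.mul_sum (I.filter (R n n1)) _ (4 ^ k * _)]
            simp only [mul_assoc]
    refine (Finset.sum_le_sum s1).trans ?_
    rw [← Finset.mul_sum]
    refine mul_le_mul_of_nonneg_left ?_ (by positivity)
    simp only [Finset.sum_filter]
    rw [Finset.sum_comm, Finset.mul_sum]
    refine Finset.sum_le_sum (fun n2 _ => ?_)
    rw [← Finset.sum_filter, Finset.sum_const, nsmul_eq_mul]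
    refine mul_le_mul_of_nonneg_right ?_ (mul_nonneg (gw_pos _ _ _).le (asq_nonneg _ _))
    exact card_bound T n1 n2 _ (fun n h => ⟨(hR n n1 n2 h).2.1, (hR n n1 n2 h).2.2⟩)
  calc _ ≤ ∑ n ∈ T, gw k lam n * ∑ m ∈ idx n, (Z * ∑ n1 ∈ I, (P n n1 m)^2 / zw k n1) := by
        refine Finset.sum_le_sum (fun n _ => mul_le_mul_of_nonneg_left
          (Finset.sum_le_sum (fun m _ => hCS n m)) (gw_pos _ _ _).le)
    _ = Z * ∑ n1 ∈ I, (1 / zw k n1) * ∑ n ∈ T, gw k lam n * ∑ m ∈ idx n, (P n n1 m)^2 := by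
        simp only [Finset.mul_sum]
        rw [Finset.sum_comm (s := I)]
        refine Finset.sum_congr rfl (fun n _ => ?_)
        rw [Finset.sum_comm (s := I)]
        refine Finset.sum_congr rfl (fun m _ => Finset.sum_congr rfl (fun n1 _ => ?_))
        ring
    _ ≤ Z * ∑ n1 ∈ I, (1 / zw k n1) * (asq a n1 * ((2*n1+1)/(4*Real.pi)) *
          (4 ^ k * Real.exp (2*lam*Real.sqrt (muSp n1))) *
          ((2 * n1 + 1) * ∑ n ∈ I, gw k lam n * asq b n)) := by
        refine mul_le_mul_of_nonneg_left (Finset.sum_le_sum (fun n1 _ =>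
          mul_le_mul_of_nonneg_left (hN n1) ?_)) hZ0
        have := zw_pos k n1
        positivity
    _ = _ := by
        rw [Finset.mul_sum, Finset.mul_sum I _ (Z * _), Finset.sum_mul]
        refine Finset.sum_congr rfl (fun n1 _ => ?_)
        have := muSp_pos n1
        have h3 : muSp n1 ^ k ≠ 0 := by positivity
        have := Real.pi_pos
        unfold zw gw
        field_simp

lemma finite_bound (k lam : ℝ) (hk : 0 ≤ k) (hl : 0 ≤ lam) (Z : ℝ)
    (hZ : ∀ I : Finset ℕ, ∑ n ∈ I, zw k n ≤ Z) (a b : ℕ → ℤ → ℝ) (I T : Finset ℕ) :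
    ∑ n ∈ T, gw k lam n * ∑ m ∈ idx n,
      (eInt ((∑ n1 ∈ I, sproj a n1) * (∑ n2 ∈ I, sproj b n2) * yC n m))^2
    ≤ 4 * (Z * (4^k / (4*Real.pi))) * (∑ n ∈ I, gw k lam n * asq a n) *
      (∑ n ∈ I, gw k lam n * asq b n) := by
  classical
  let R1 : ℕ → ℕ → ℕ → Prop := fun n n1 n2 => (n ≤ n1 + n2 ∧ n2 ≤ n + n1 ∧ n1 ≤ n + n2) ∧ n ≤ 2 * n2
  let R2 : ℕ → ℕ → ℕ → Prop := fun n n2 n1 => (n ≤ n1 + n2 ∧ n2 ≤ n + n1 ∧ n1 ≤ n + n2) ∧ 2 * n2 < n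
  have h1 := half_bound k lam hk hl Z hZ a b I T R1 (fun n n1 n2 h => by
    simp only [R1] at h; omega)
  have h2 := half_bound k lam hk hl Z hZ b a I T R2 (fun n n1 n2 h => by
    simp only [R2] at h; omega)
  have key : ∀ n, ∀ m ∈ idx n,
      eInt ((∑ n1 ∈ I, sproj a n1) * (∑ n2 ∈ I, sproj b n2) * yC n m) =
      (∑ n1 ∈ I, eInt (sproj a n1 * (∑ n2 ∈ I.filter (R1 n n1), sproj b n2) * yC n m)) +
      (∑ n1 ∈ I, eInt (sproj b n1 * (∑ n2 ∈ I.filter (R2 n n1), sproj a n2) * yC n m)) := by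
    intro n m hm
    have e : ∀ (c d : ℕ → ℤ → ℝ) (R : ℕ → ℕ → ℕ → Prop) [∀ n n1, DecidablePred (R n n1)],
        (∑ n1 ∈ I, eInt (sproj c n1 * (∑ n2 ∈ I.filter (R n n1), sproj d n2) * yC n m)) =
        ∑ n1 ∈ I, ∑ n2 ∈ I, if R n n1 n2 then eInt (sproj c n1 * sproj d n2 * yC n m) else 0 := by
      intro c d R _
      refine Finset.sum_congr rfl (fun n1 _ => ?_)
      rw [Finset.mul_sum, Finset.sum_mul, map_sum, Finset.sum_filter]
    rw [e a b R1, e b a R2, Finset.sum_comm (f := fun n1 n2 => if R2 n n1 n2 then _ else _),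
      ← Finset.sum_add_distrib, Finset.sum_mul_sum, Finset.sum_mul, map_sum]
    refine Finset.sum_congr rfl (fun n1 _ => ?_)
    rw [← Finset.sum_add_distrib, Finset.sum_mul, map_sum]
    refine Finset.sum_congr rfl (fun n2 _ => ?_)
    rw [mul_comm (sproj b n2) (sproj a n1)]
    by_cases hn : n ≤ n1 + n2 ∧ n2 ≤ n + n1 ∧ n1 ≤ n + n2
    · by_cases hh : n ≤ 2 * n2
      · rw [if_pos ⟨hn, hh⟩, if_neg (fun h => by have := h.2; omega), add_zero]
      · rw [if_neg (fun h => by have := h.2; omega), if_pos ⟨hn, by omega⟩, zero_add]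
    · rw [sproj_sel a b n1 n2 n m hm hn]
      simp
  have h3 : ∑ n ∈ T, gw k lam n * ∑ m ∈ idx n,
      (eInt ((∑ n1 ∈ I, sproj a n1) * (∑ n2 ∈ I, sproj b n2) * yC n m))^2 ≤
      2 * (∑ n ∈ T, gw k lam n * ∑ m ∈ idx n, (∑ n1 ∈ I,
        eInt (sproj a n1 * (∑ n2 ∈ I.filter (R1 n n1), sproj b n2) * yC n m))^2) +
      2 * (∑ n ∈ T, gw k lam n * ∑ m ∈ idx n, (∑ n1 ∈ I,
        eInt (sproj b n1 * (∑ n2 ∈ I.filter (R2 n n1), sproj a n2) * yC n m))^2) := by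
    rw [Finset.mul_sum T _ (2:ℝ), Finset.mul_sum T _ (2:ℝ), ← Finset.sum_add_distrib]
    refine Finset.sum_le_sum (fun n _ => ?_)
    rw [mul_left_comm 2, mul_left_comm 2, ← mul_add, Finset.mul_sum (idx n) _ (2:ℝ), Finset.mul_sum (idx n) _ (2:ℝ), ← Finset.sum_add_distrib]
    refine mul_le_mul_of_nonneg_left (Finset.sum_le_sum (fun m hm => ?_)) (gw_pos _ _ _).le
    rw [key n m hm]
    nlinarith [sq_nonneg ((∑ n1 ∈ I, eInt (sproj a n1 * (∑ n2 ∈ I.filter (R1 n n1), sproj b n2) * yC n m)) -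
      (∑ n1 ∈ I, eInt (sproj b n1 * (∑ n2 ∈ I.filter (R2 n n1), sproj a n2) * yC n m)))]
  refine h3.trans ?_
  nlinarith [h1, h2]

/-! Completeness of the harmonics -/

lemma legD_degree (m j : ℕ) : (legD (m+j) m).degree = j := by
  have hT := pInt_legT (m+j) m (by omega)
  have hpos : (0:ℝ) < 2/(2*((m+j:ℕ):ℝ)+1) := by positivity
  have hne : legD (m+j) m ≠ 0 := by
    intro h
    have : pInt (legT (m+j) m) = 0 := by
      unfold legT
      rw [h]; simp [pInt]
    linarith
  rw [Polynomial.degree_eq_natDegree hne]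
  have hle := natDegree_legD (m+j) m
  have : (legD (m+j) m).natDegree = j := by
    by_contra hcon
    have h0 := pInt_orth (m+j) _ m (legD (m+j) m) le_rfl (by omega)
    have : pInt (legT (m+j) m) = 0 := by
      have e : legT (m+j) m = Polynomial.C (frat (m+j) m) *
          ((1-Polynomial.X^2)^m * legD (m+j) m * legD (m+j) m) := by
        unfold legT; ring
      rw [e, pInt_C_mul, h0, mul_zero]
    linarith
  rw [this]

def legSeq (m : ℕ) : Polynomial.Sequence ℝ where
  elems' j := legD (m+j) m
  degree_eq' j := legD_degree m j

lemma legD_span (m : ℕ) (L : Polynomial ℝ →ₗ[ℝ] ℝ) (h : ∀ j, L (legD (m+j) m) = 0)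
    (p : Polynomial ℝ) : L p = 0 := by
  have hs := (legSeq m).span (fun i => by
    rw [isUnit_iff_ne_zero, Ne, Polynomial.leadingCoeff_eq_zero]
    intro h0
    have := legD_degree m i
    have h1 : legD (m+i) m = 0 := h0
    rw [h1] at this
    simp at this)
  have hp : p ∈ Submodule.span ℝ (Set.range (legSeq m)) := by rw [hs]; trivial
  have hle : Submodule.span ℝ (Set.range (legSeq m)) ≤ LinearMap.ker L := by
    rw [Submodule.span_le]
    rintro _ ⟨j, rfl⟩
    exact h j
  exact hle hp

lemma poly_dense (h : ℝ → ℝ) (hc : Continuous h)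
    (H : ∀ p : Polynomial ℝ, ∫ θ in (0:ℝ)..Real.pi, h θ * p.eval (Real.cos θ) = 0) :
    ∀ θ ∈ Set.Icc 0 Real.pi, h θ = 0 := by
  by_contra! hcon
  obtain ⟨t, ht, hne⟩ := hcon
  have hI : 0 < ∫ θ in (0:ℝ)..Real.pi, h θ * h θ :=
    intervalIntegral.integral_pos Real.pi_pos (by fun_prop) (fun x _ => mul_self_nonneg _)
      ⟨t, ht, mul_self_pos.2 hne⟩
  set I := ∫ θ in (0:ℝ)..Real.pi, h θ * h θ with hIdef
  have hA : 0 ≤ ∫ θ in (0:ℝ)..Real.pi, |h θ| :=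
    intervalIntegral.integral_nonneg Real.pi_pos.le (fun x _ => abs_nonneg _)
  set A := ∫ θ in (0:ℝ)..Real.pi, |h θ| with hAdef
  have he : 0 < I / (A+1) := by positivity
  obtain ⟨p, hp⟩ := exists_polynomial_near_of_continuousOn (-1) 1 (fun x => h (Real.arccos x))
    (by have := Real.continuous_arccos; fun_prop) (I/(A+1)) he
  have hpc : Continuous (fun θ => p.eval (Real.cos θ)) := p.continuous.comp Real.continuous_cos
  have h1 : I ≤ ∫ θ in (0:ℝ)..Real.pi, I/(A+1) * |h θ| := by
    have : I = ∫ θ in (0:ℝ)..Real.pi, (h θ * h θ - h θ * p.eval (Real.cos θ)) := by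
      rw [intervalIntegral.integral_sub, H p, sub_zero]
      · exact Continuous.intervalIntegrable (by fun_prop) _ _
      · exact Continuous.intervalIntegrable (by fun_prop) _ _
    refine this.le.trans ?_
    apply intervalIntegral.integral_mono_on Real.pi_pos.le
    · exact Continuous.intervalIntegrable (by fun_prop) _ _
    · exact Continuous.intervalIntegrable (by fun_prop) _ _
    intro x hx
    have := hp (Real.cos x) ⟨Real.neg_one_le_cos x, Real.cos_le_one x⟩
    rw [Real.arccos_cos hx.1 hx.2] at this
    rw [← mul_sub]
    calc h x * (h x - p.eval (Real.cos x)) ≤ |h x| * |h x - p.eval (Real.cos x)| := by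
          rw [← abs_mul]; exact le_abs_self _
      _ ≤ |h x| * (I/(A+1)) := by
          rw [abs_sub_comm] at this
          gcongr
      _ = _ := by rw [mul_comm]
  rw [intervalIntegral.integral_const_mul, ← hAdef, div_mul_eq_mul_div,
    le_div_iff₀ (by positivity)] at h1
  nlinarith

lemma trig_zero (f : ℝ → ℝ) (hc : Continuous f) (hp : ∀ x, f (x + 2*Real.pi) = f x)
    (h : ∀ m : ℤ, ∫ φ in (0:ℝ)..(2*Real.pi), f φ * sTrig m φ = 0) : ∀ x, f x = 0 := by
  haveI : Fact (0 < 2*Real.pi) := ⟨Real.two_pi_pos⟩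
  have hper : Function.Periodic (fun x => (f x : ℂ)) (2*Real.pi) := fun x => by simp [hp]
  have hcl : Continuous hper.lift := by
    rw [continuous_coinduced_dom]
    show Continuous (fun x => (f x : ℂ))
    fun_prop
  let F : C(AddCircle (2*Real.pi), ℂ) := ⟨hper.lift, hcl⟩
  have hF : ∀ x : ℝ, F (x : AddCircle (2*Real.pi)) = f x := fun x => rfl
  have hcos : ∀ n : ℤ, ∫ φ in (0:ℝ)..(2*Real.pi), f φ * Real.cos (n * φ) = 0 := by
    intro n
    have h1 := h n.natAbs
    rcases sTrig_cases (n.natAbs : ℤ) with ⟨_, h2⟩ | ⟨h3, _⟩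
    · rw [h2] at h1
      rw [← h1]
      congr 1; funext φ
      congr 1
      rcases Int.natAbs_eq n with h4 | h4
      · rw [Int.natAbs_natCast, ← h4]
      · rw [Int.natAbs_natCast]
        conv_lhs => rw [h4]
        push_cast
        rw [neg_mul, Real.cos_neg]
    · omega
  have hsin : ∀ n : ℤ, ∫ φ in (0:ℝ)..(2*Real.pi), f φ * Real.sin (n * φ) = 0 := by
    intro n
    by_cases hn : n = 0
    · subst hn; simp
    have h1 := h (-(n.natAbs))
    rcases sTrig_cases (-(n.natAbs : ℤ)) with ⟨h3, _⟩ | ⟨_, h2⟩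
    · omega
    · rw [h2] at h1
      simp only [Int.natAbs_neg, Int.natAbs_natCast] at h1
      rcases Int.natAbs_eq n with h4 | h4
      · rw [← h4] at h1; exact h1
      · rw [h4]
        simp only [Int.cast_neg, neg_mul, Real.sin_neg, mul_neg, intervalIntegral.integral_neg]
        rw [neg_eq_zero]
        exact h1
  have hco : ∀ n : ℤ, fourierCoeff F n = 0 := by
    intro n
    rw [fourierCoeff_eq_intervalIntegral F n 0]
    have : ∫ x in (0:ℝ)..(0 + 2*Real.pi), fourier (-n) (x : AddCircle (2*Real.pi)) • F x
        = ((∫ φ in (0:ℝ)..(2*Real.pi), f φ * Real.cos (n * φ) : ℝ) : ℂ)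
          - Complex.I * ((∫ φ in (0:ℝ)..(2*Real.pi), f φ * Real.sin (n * φ) : ℝ) : ℂ) := by
      rw [zero_add, ← intervalIntegral.integral_ofReal, ← intervalIntegral.integral_ofReal,
        ← intervalIntegral.integral_const_mul, ← intervalIntegral.integral_sub]
      · congr 1; funext x
        rw [hF, fourier_coe_apply]
        have : 2 * (Real.pi:ℂ) * Complex.I * ((-n : ℤ) : ℂ) * x / ((2*Real.pi : ℝ) : ℂ)
            = ((-(n*x) : ℝ) : ℂ) * Complex.I := by
          have := Real.pi_ne_zero
          push_cast
          field_simp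
        rw [this, Complex.exp_mul_I, ← Complex.ofReal_cos, ← Complex.ofReal_sin, Real.cos_neg,
          Real.sin_neg]
        simp only [smul_eq_mul]
        push_cast
        ring
      · exact Continuous.intervalIntegrable (by fun_prop) _ _
      · exact Continuous.intervalIntegrable (by fun_prop) _ _
    rw [this, hcos, hsin]
    simp
  intro x
  have hs := has_pointwise_sum_fourier_series_of_summable (f := F)
    (by rw [show fourierCoeff F = fun _ => 0 from funext hco]; exact summable_zero) (x : AddCircle (2*Real.pi))
  simp only [hco, zero_smul] at hs
  have := hs.unique hasSum_zero
  rw [hF] at this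
  exact_mod_cast this

lemma yN_ne (n : ℕ) (m : ℤ) : yN n m ≠ 0 := by
  intro h
  have h1 := yN_sq n m
  have := frat_pos n m.natAbs
  rw [h] at h1
  have : 0 < (if m = 0 then (1:ℝ) else 2) * ((2*(n:ℝ)+1)/(4*Real.pi) * frat n m.natAbs) := by
    have : (0:ℝ) < if m = 0 then (1:ℝ) else 2 := by split_ifs <;> norm_num
    positivity
  rw [← h1] at this
  simp at this

def gM (g : C(ℝ × ℝ, ℝ)) (m : ℤ) (θ : ℝ) : ℝ := ∫ φ in (0:ℝ)..(2*Real.pi), g (θ, φ) * sTrig m φ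

lemma gM_cont (g : C(ℝ × ℝ, ℝ)) (m : ℤ) : Continuous (gM g m) := by
  apply intervalIntegral.continuous_parametric_intervalIntegral_of_continuous'
  have := sTrig_cont m
  simp only [Function.uncurry_def]
  fun_prop

lemma eInt_gM (g : C(ℝ × ℝ, ℝ)) (n : ℕ) (m : ℤ) : eInt (g * yC n m) =
    yN n m * ∫ θ in (0:ℝ)..Real.pi, (gM g m θ * |Real.sin θ| ^ m.natAbs * Real.sin θ) *
      (legD n m.natAbs).eval (Real.cos θ) := by
  have hs := sTrig_cont m
  have hl := (legD n m.natAbs).continuous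
  rw [eInt_def, MeasureTheory.intervalIntegral_intervalIntegral_swap]
  · rw [← intervalIntegral.integral_const_mul]
    congr 1; funext θ
    unfold gM
    rw [show ∀ c I a s l : ℝ, c * (I * a * s * l) = I * (c * a * s * l) from fun _ _ _ _ _ => by ring,
      ← intervalIntegral.integral_mul_const]
    congr 1; funext φ
    show g (θ, φ) * (yN n m * |Real.sin θ| ^ m.natAbs * (legD n m.natAbs).eval (Real.cos θ)
      * sTrig m φ) * Real.sin θ = _
    ring
  · have hc : Continuous (Function.uncurry fun φ θ => (g * yC n m) (θ, φ) * Real.sin θ) := by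
      simp only [Function.uncurry_def]
      fun_prop
    apply IntegrableOn.mono_set (t := Set.Icc 0 (2*Real.pi) ×ˢ Set.Icc 0 Real.pi)
    · exact hc.continuousOn.integrableOn_compact (isCompact_Icc.prod isCompact_Icc)
    · rw [Set.uIoc_of_le (by positivity), Set.uIoc_of_le (by positivity)]
      exact Set.prod_mono Set.Ioc_subset_Icc_self Set.Ioc_subset_Icc_self

lemma complete (g : C(ℝ × ℝ, ℝ)) (hp : ∀ θ φ, g (θ, φ + 2*Real.pi) = g (θ, φ))
    (h : ∀ n, ∀ m ∈ idx n, eInt (g * yC n m) = 0) :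
    ∀ θ ∈ Set.Icc 0 Real.pi, ∀ φ, g (θ, φ) = 0 := by
  have h1 : ∀ m : ℤ, ∀ θ ∈ Set.Icc 0 Real.pi,
      gM g m θ * |Real.sin θ| ^ m.natAbs * Real.sin θ = 0 := by
    intro m
    have hg := gM_cont g m
    have hhc : Continuous (fun θ => gM g m θ * |Real.sin θ| ^ m.natAbs * Real.sin θ) := by
      fun_prop
    apply poly_dense _ hhc
    let L : Polynomial ℝ →ₗ[ℝ] ℝ :=
      { toFun := fun p => ∫ θ in (0:ℝ)..Real.pi,
          (gM g m θ * |Real.sin θ| ^ m.natAbs * Real.sin θ) * p.eval (Real.cos θ)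
        map_add' := fun p q => by
          have := p.continuous
          have := q.continuous
          rw [← intervalIntegral.integral_add]
          · simp [mul_add]
          · exact Continuous.intervalIntegrable (by fun_prop) _ _
          · exact Continuous.intervalIntegrable (by fun_prop) _ _
        map_smul' := fun c p => by
          simp only [RingHom.id_apply, smul_eq_mul]
          rw [← intervalIntegral.integral_const_mul]
          congr 1; funext θ
          rw [Polynomial.eval_smul, smul_eq_mul]; ring }
    intro p
    refine legD_span m.natAbs L (fun j => ?_) p
    have h2 := h (m.natAbs + j) m (mem_idx.2 (by omega))
    rw [eInt_gM] at h2
    exact (mul_eq_zero.1 h2).resolve_left (yN_ne _ _)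
  have h2 : ∀ θ ∈ Set.Ioo 0 Real.pi, ∀ φ, g (θ, φ) = 0 := by
    intro θ hθ
    apply trig_zero (fun φ => g (θ, φ)) (by fun_prop) (hp θ)
    intro m
    have h3 := h1 m θ (Set.Ioo_subset_Icc_self hθ)
    have hs := Real.sin_pos_of_mem_Ioo hθ
    have h4 : |Real.sin θ| ^ m.natAbs ≠ 0 := pow_ne_zero _ (abs_ne_zero.2 hs.ne')
    rcases mul_eq_zero.1 h3 with h5 | h5
    · exact (mul_eq_zero.1 h5).resolve_right h4
    · exact absurd h5 hs.ne'
  intro θ hθ φ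
  have hcl : IsClosed {θ : ℝ | g (θ, φ) = 0} := isClosed_eq (by fun_prop) continuous_const
  have : closure (Set.Ioo 0 Real.pi) ⊆ {θ : ℝ | g (θ, φ) = 0} :=
    hcl.closure_subset_iff.2 (fun t ht => h2 t ht φ)
  rw [closure_Ioo Real.pi_ne_zero.symm] at this
  exact this hθ

/-! Passage to the limit -/

open Filter Topology in
lemma eInt_tendsto {F : ℕ → C(ℝ × ℝ, ℝ)} {f : C(ℝ × ℝ, ℝ)} (hF : Tendsto F atTop (𝓝 f)) :
    Tendsto (fun N => eInt (F N)) atTop (𝓝 (eInt f)) := by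
  rw [ContinuousMap.tendsto_iff_forall_isCompact_tendstoUniformlyOn] at hF
  have h := hF (Set.Icc 0 Real.pi ×ˢ Set.Icc 0 (2*Real.pi)) (isCompact_Icc.prod isCompact_Icc)
  rw [Metric.tendstoUniformlyOn_iff] at h
  have hE : 0 ≤ eInt 1 := by
    have : eInt 0 ≤ eInt 1 := eInt_mono (fun _ _ _ _ => by simp)
    simpa using this
  rw [Metric.tendsto_atTop']
  intro ε hε
  have hd : 0 < ε / (eInt 1 + 1) := by positivity
  obtain ⟨N, hN⟩ := eventually_atTop.1 (h _ hd)
  refine ⟨N, fun n hn => ?_⟩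
  have h2 := hN n hn.le
  have key : ∀ θ ∈ Set.Icc 0 Real.pi, ∀ φ ∈ Set.Icc 0 (2*Real.pi),
      |f (θ, φ) - F n (θ, φ)| ≤ ε / (eInt 1 + 1) := fun θ hθ φ hφ => (h2 (θ, φ) ⟨hθ, hφ⟩).le
  have u1 : eInt (F n - f) ≤ eInt ((ε / (eInt 1 + 1)) • (1 : C(ℝ × ℝ, ℝ))) :=
    eInt_mono (fun θ hθ φ hφ => by
      have := (abs_le.1 (key θ hθ φ hφ)).1
      simp; linarith)
  have u2 : eInt (f - F n) ≤ eInt ((ε / (eInt 1 + 1)) • (1 : C(ℝ × ℝ, ℝ))) :=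
    eInt_mono (fun θ hθ φ hφ => by
      have := (abs_le.1 (key θ hθ φ hφ)).2
      simp; linarith)
  rw [map_sub, map_smul, smul_eq_mul] at u1 u2
  have h3 : ε / (eInt 1 + 1) * eInt 1 < ε := by
    rw [div_mul_eq_mul_div, div_lt_iff₀ (by positivity)]
    nlinarith
  rw [Real.dist_eq, abs_lt]
  constructor <;> linarith

lemma muSp_ge_one (n : ℕ) : 1 ≤ muSp n := by
  unfold muSp
  have : (0:ℝ) ≤ n := n.cast_nonneg
  nlinarith

lemma zw_summable (k : ℝ) (hk : 3/2 < k) : Summable (zw k) := by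
  rw [← summable_nat_add_iff 1]
  have h1 : Summable (fun n : ℕ => (n:ℝ) ^ (2 - 2*k)) := Real.summable_nat_rpow.2 (by linarith)
  have h2 := ((summable_nat_add_iff 1).2 h1).mul_left 4
  refine Summable.of_nonneg_of_le (fun n => (zw_pos _ _).le) (fun n => ?_) h2
  have hn : (0:ℝ) < ((n+1:ℕ):ℝ) := by positivity
  set x : ℝ := ((n+1:ℕ):ℝ) with hx
  have hm := muSp_pos (n+1)
  have hmx : muSp (n+1) = x*(x+1)+1 := rfl
  unfold zw
  rw [← hx]
  calc (2*x+1)^2 / muSp (n+1) ^ k ≤ (4 * muSp (n+1)) / muSp (n+1) ^ k := by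
        gcongr
        rw [hmx]; nlinarith
    _ = 4 * muSp (n+1) ^ (1-k) := by
        rw [Real.rpow_sub hm, Real.rpow_one]; ring
    _ ≤ 4 * (x^2) ^ (1-k) := by
        gcongr 4 * ?_
        apply Real.rpow_le_rpow_of_nonpos (by positivity) _ (by linarith)
        rw [hmx]; nlinarith
    _ = 4 * x ^ (2-2*k) := by
        rw [← Real.rpow_natCast, ← Real.rpow_mul hn.le]
        congr 2
        push_cast; ring

lemma gw_ge (k lam : ℝ) (hl : 0 ≤ lam) (n : ℕ) : muSp n ^ k ≤ gw k lam n := by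
  unfold gw
  have := Real.rpow_pos_of_pos (muSp_pos n) k
  apply le_mul_of_one_le_right this.le
  apply Real.one_le_exp
  positivity

lemma sproj_bound (k lam : ℝ) (hl : 0 ≤ lam) (a : ℕ → ℤ → ℝ) (n : ℕ) (p : ℝ × ℝ) :
    ‖sproj a n p‖ ≤ gw k lam n * asq a n + zw k n := by
  have h := sproj_sup a n p
  have hg := gw_pos k lam n
  have hge := gw_ge k lam hl n
  have hmk := Real.rpow_pos_of_pos (muSp_pos n) k
  have ha := asq_nonneg a n
  have hz := zw_pos k n
  have h1 : (2*(n:ℝ)+1)/(4*Real.pi) ≤ gw k lam n * zw k n := by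
    unfold zw
    have hn : (0:ℝ) ≤ n := n.cast_nonneg
    have hpi := Real.pi_gt_three
    calc (2*(n:ℝ)+1)/(4*Real.pi) ≤ (2*n+1) := div_le_self (by positivity) (by linarith)
      _ ≤ (2*n+1)^2 := by nlinarith
      _ = muSp n ^ k * ((2*n+1)^2 / muSp n ^ k) := by field_simp
      _ ≤ _ := by gcongr
  rw [Real.norm_eq_abs]
  apply abs_le_of_sq_le_sq _ (by positivity)
  calc (sproj a n p)^2 ≤ asq a n * ((2*n+1)/(4*Real.pi)) := h
    _ ≤ asq a n * (gw k lam n * zw k n) := by gcongr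
    _ ≤ _ := by
        have : 0 ≤ gw k lam n * asq a n := by positivity
        nlinarith [mul_nonneg this hz.le, sq_nonneg (gw k lam n * asq a n), sq_nonneg (zw k n)]

lemma sTrig_per (m : ℤ) (φ : ℝ) : sTrig m (φ + 2*Real.pi) = sTrig m φ := by
  rcases sTrig_cases m with ⟨_, h⟩ | ⟨_, h⟩
  · rw [h]
    simp only [mul_add]
    rw [Real.cos_add_int_mul_two_pi]
  · rw [h]
    simp only [mul_add]
    rw [Real.sin_add_int_mul_two_pi]

lemma sproj_per (a : ℕ → ℤ → ℝ) (n : ℕ) (θ φ : ℝ) :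
    sproj a n (θ, φ + 2*Real.pi) = sproj a n (θ, φ) := by
  rw [sproj_apply, sproj_apply]
  refine Finset.sum_congr rfl (fun m _ => ?_)
  congr 1
  show _ * sTrig m (φ + 2*Real.pi) = _ * sTrig m φ
  rw [sTrig_per]

open Filter Topology in
lemma synth (k lam : ℝ) (hk : 3/2 < k) (hl : 0 ≤ lam) (u : C(ℝ × ℝ, ℝ))
    (hp : ∀ θ φ, u (θ, φ + 2*Real.pi) = u (θ, φ)) (a : ℕ → ℤ → ℝ)
    (ha : ∀ n m, a n m = eInt (u * yC n m))
    (hS : Summable (fun n => gw k lam n * asq a n)) :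
    ∃ w : C(ℝ × ℝ, ℝ), Tendsto (fun N => ∑ n ∈ Finset.range N, sproj a n) atTop (𝓝 w) ∧
      ∀ θ ∈ Set.Icc 0 Real.pi, ∀ φ, u (θ, φ) = w (θ, φ) := by
  have hM := hS.add (zw_summable k hk)
  have hb := sproj_bound k lam hl a
  let w : C(ℝ × ℝ, ℝ) := ⟨fun p => ∑' n, sproj a n p,
    continuous_tsum (fun n => (sproj a n).continuous) hM hb⟩
  have hw : Tendsto (fun N => ∑ n ∈ Finset.range N, sproj a n) atTop (𝓝 w) := by
    rw [ContinuousMap.tendsto_iff_forall_isCompact_tendstoUniformlyOn]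
    intro K _
    have := (tendstoUniformly_tsum_nat hM hb).tendstoUniformlyOn (s := K)
    refine this.congr (Eventually.of_forall fun N x _ => ?_)
    simp
  refine ⟨w, hw, ?_⟩
  have hwp : ∀ θ φ, w (θ, φ + 2*Real.pi) = w (θ, φ) := fun θ φ =>
    tsum_congr (fun n => sproj_per a n θ φ)
  have hwc : ∀ n, ∀ m ∈ idx n, eInt (w * yC n m) = a n m := by
    intro n m hm
    have h1 := eInt_tendsto (hw.mul_const (yC n m))
    refine tendsto_nhds_unique h1 (tendsto_const_nhds.congr' ?_)
    filter_upwards [eventually_gt_atTop n] with N hN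
    rw [Finset.sum_mul, map_sum, Finset.sum_congr rfl (fun i _ => eInt_sproj_mul a i n m hm)]
    rw [Finset.sum_ite_eq' (Finset.range N) n, if_pos (Finset.mem_range.2 hN)]
  intro θ hθ φ
  have := complete (u - w) (fun θ φ => by simp [hp, hwp]) (fun n m hm => by
    rw [sub_mul, map_sub, hwc n m hm, ha, sub_self]) θ hθ φ
  simpa [sub_eq_zero] using this

lemma gevK_eq (k lam : ℝ) (u : C(ℝ × ℝ, ℝ)) :
    gevKNormSq k lam (fun θ φ => u (θ, φ)) =
      ∑' n, ENNReal.ofReal (gw k lam n * asq (fun n m => eInt (u * yC n m)) n) := by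
  unfold gevKNormSq
  rw [ENNReal.tsum_prod (f := fun (n : ℕ) (m : ℤ) => if |m| ≤ (n : ℤ) then
    ENNReal.ofReal ((muSp n) ^ k * Real.exp (2*lam*Real.sqrt (muSp n)) *
      (coeff (fun θ φ => u (θ, φ)) n m)^2) else 0)]
  refine tsum_congr (fun n => ?_)
  rw [tsum_eq_sum (s := idx n)]
  · unfold asq
    rw [Finset.mul_sum, ENNReal.ofReal_sum_of_nonneg]
    · refine Finset.sum_congr rfl (fun m hm => ?_)
      have := mem_idx.1 hm
      rw [if_pos (by rw [Int.abs_eq_natAbs]; omega), coeff_eq]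
      rfl
    · intro m _
      have := gw_pos k lam n
      positivity
  · intro m hm
    rw [mem_idx] at hm
    rw [if_neg (by rw [Int.abs_eq_natAbs]; omega)]

open Filter Topology in
lemma prod_bound (k lam : ℝ) (hk : 3/2 < k) (hl : 0 ≤ lam) (u v : C(ℝ × ℝ, ℝ))
    (hpu : ∀ θ φ, u (θ, φ + 2*Real.pi) = u (θ, φ))
    (hpv : ∀ θ φ, v (θ, φ + 2*Real.pi) = v (θ, φ)) (a b : ℕ → ℤ → ℝ)
    (ha : ∀ n m, a n m = eInt (u * yC n m)) (hb : ∀ n m, b n m = eInt (v * yC n m))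
    (hSa : Summable (fun n => gw k lam n * asq a n))
    (hSb : Summable (fun n => gw k lam n * asq b n)) (T : Finset ℕ) :
    ∑ n ∈ T, gw k lam n * asq (fun n m => eInt (u * v * yC n m)) n ≤
      4*((∑' n, zw k n)*(4^k/(4*Real.pi))) * (∑' n, gw k lam n * asq a n) *
        (∑' n, gw k lam n * asq b n) := by
  obtain ⟨U, hU, hU'⟩ := synth k lam hk hl u hpu a ha hSa
  obtain ⟨V, hV, hV'⟩ := synth k lam hk hl v hpv b hb hSb
  have e : ∀ n m, eInt (u * v * yC n m) = eInt (U * V * yC n m) := fun n m =>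
    eInt_congr (fun θ hθ φ _ => by
      simp only [ContinuousMap.mul_apply, hU' θ hθ φ, hV' θ hθ φ])
  simp only [e]
  have hZ : ∀ I : Finset ℕ, ∑ n ∈ I, zw k n ≤ ∑' n, zw k n := fun I =>
    (zw_summable k hk).sum_le_tsum I (fun n _ => (zw_pos k n).le)
  have hZ0 : 0 ≤ ∑' n, zw k n := tsum_nonneg (fun n => (zw_pos k n).le)
  have hA : ∀ n, 0 ≤ gw k lam n * asq a n := fun n => mul_nonneg (gw_pos _ _ _).le (asq_nonneg _ _)
  have hB : ∀ n, 0 ≤ gw k lam n * asq b n := fun n => mul_nonneg (gw_pos _ _ _).le (asq_nonneg _ _)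
  have hlim : Tendsto (fun N => ∑ n ∈ T, gw k lam n * ∑ m ∈ idx n,
      (eInt ((∑ n1 ∈ Finset.range N, sproj a n1) * (∑ n2 ∈ Finset.range N, sproj b n2) *
        yC n m))^2) atTop
      (𝓝 (∑ n ∈ T, gw k lam n * ∑ m ∈ idx n, (eInt (U * V * yC n m))^2)) := by
    refine tendsto_finsetSum _ (fun n _ => Tendsto.const_mul _ (tendsto_finsetSum _ (fun m _ => ?_)))
    exact (eInt_tendsto ((hU.mul hV).mul_const (yC n m))).pow 2
  refine le_of_tendsto' hlim (fun N => ?_)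
  refine (finite_bound k lam (by linarith) hl _ hZ a b (Finset.range N) T).trans ?_
  have h1 := hSa.sum_le_tsum (Finset.range N) (fun n _ => hA n)
  have h2 := hSb.sum_le_tsum (Finset.range N) (fun n _ => hB n)
  have h3 : 0 ≤ ∑ n ∈ Finset.range N, gw k lam n * asq b n := Finset.sum_nonneg (fun n _ => hB n)
  have h4 : 0 ≤ ∑' n, gw k lam n * asq a n := tsum_nonneg hA
  gcongr

lemma sum_of_fin (k lam : ℝ) (u : C(ℝ × ℝ, ℝ))
    (h : gevKNormSq k lam (fun θ φ => u (θ, φ)) < ⊤) :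
    Summable (fun n => gw k lam n * asq (fun n m => eInt (u * yC n m)) n) ∧
    gevKNormSq k lam (fun θ φ => u (θ, φ)) =
      ENNReal.ofReal (∑' n, gw k lam n * asq (fun n m => eInt (u * yC n m)) n) := by
  rw [gevK_eq] at h ⊢
  have h0 : ∀ n, 0 ≤ gw k lam n * asq (fun n m => eInt (u * yC n m)) n :=
    fun n => mul_nonneg (gw_pos _ _ _).le (asq_nonneg _ _)
  have hS := ENNReal.summable_toReal h.ne
  simp only [ENNReal.toReal_ofReal (h0 _)] at hS
  exact ⟨hS, (ENNReal.ofReal_tsum_of_nonneg h0 hS).symm⟩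

/-- For `k > 3/2` the Gevrey class `G^{k/2}_λ` is a topological
algebra: `‖uv‖_{G^{k/2}_λ} ≤ C_k ‖u‖_{G^{k/2}_λ} ‖v‖_{G^{k/2}_λ}` with `C_k`
depending only on `k` (not on `λ`). -/
theorem gevrey_algebra (k : ℝ) (hk : 3/2 < k) :
    ∃ C : ℝ, 0 < C ∧
      ∀ lam : ℝ, 0 ≤ lam → ∀ u v : SphereFun,
        Continuous (Function.uncurry u) → Continuous (Function.uncurry v) →
        PeriodicPhi u → PeriodicPhi v →
        gevKNormSq k lam u < ⊤ → gevKNormSq k lam v < ⊤ →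
        gevKNormSq k lam (fun θ φ => u θ φ * v θ φ) < ⊤ ∧
        gevKNormSq k lam (fun θ φ => u θ φ * v θ φ)
          ≤ ENNReal.ofReal (C^2) * gevKNormSq k lam u * gevKNormSq k lam v := by
  set K : ℝ := 4*((∑' n, zw k n)*(4^k/(4*Real.pi))) with hK
  have hZ : 0 < ∑' n, zw k n :=
    (zw_summable k hk).tsum_pos (fun n => (zw_pos k n).le) 0 (zw_pos k 0)
  have h4 : (0:ℝ) < 4^k := Real.rpow_pos_of_pos (by norm_num) k
  have hK0 : 0 < K := by positivity
  refine ⟨Real.sqrt K, Real.sqrt_pos.2 hK0, ?_⟩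
  intro lam hl u v hu hv hpu hpv fu fv
  rw [Real.sq_sqrt hK0.le]
  let U : C(ℝ × ℝ, ℝ) := ⟨Function.uncurry u, hu⟩
  let V : C(ℝ × ℝ, ℝ) := ⟨Function.uncurry v, hv⟩
  obtain ⟨hSa, ea⟩ := sum_of_fin k lam U fu
  obtain ⟨hSb, eb⟩ := sum_of_fin k lam V fv
  have ea' : gevKNormSq k lam u = _ := ea
  have eb' : gevKNormSq k lam v = _ := eb
  have hle : gevKNormSq k lam (fun θ φ => u θ φ * v θ φ)
      ≤ ENNReal.ofReal K * gevKNormSq k lam u * gevKNormSq k lam v := by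
    have e : gevKNormSq k lam (fun θ φ => u θ φ * v θ φ) = _ := gevK_eq k lam (U * V)
    have hA : 0 ≤ ∑' n, gw k lam n * asq (fun n m => eInt (U * yC n m)) n :=
      tsum_nonneg (fun n => mul_nonneg (gw_pos _ _ _).le (asq_nonneg _ _))
    rw [e, ea', eb', ← ENNReal.ofReal_mul hK0.le, ← ENNReal.ofReal_mul (by positivity),
      ENNReal.tsum_eq_iSup_sum]
    refine iSup_le (fun T => ?_)
    rw [← ENNReal.ofReal_sum_of_nonneg
      (fun n _ => mul_nonneg (gw_pos _ _ _).le (asq_nonneg _ _))]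
    exact ENNReal.ofReal_le_ofReal (prod_bound k lam hk hl U V hpu hpv _ _
      (fun _ _ => rfl) (fun _ _ => rfl) hSa hSb T)
  exact ⟨hle.trans_lt (ENNReal.mul_lt_top (ENNReal.mul_lt_top ENNReal.ofReal_lt_top fu) fv), hle⟩
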